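/- Assume, in addition to the base hypotheses, that there exist ρ > 0 and b < 0 with |b|ρ² < 1 such that W(p) = |p − p₋|² + b|p − p₋|⁴ whenever |p − p₋| ≤ ρ and W(p) = |p − p₊|² + b|p − p₊|⁴ whenever |p − p₊| ≤ ρ. Then for every A ∈ ℝ the isoperimetric problem with constraint A has a solution. -/

import Mathlib

open MeasureTheory Set Filter Topology
open scoped ENNReal

noncomputable section

/-- The Euclidean norm of a vector in `ℝ × ℝ`. -/
def enorm2 (v : ℝ × ℝ) : ℝ := Real.sqrt (v.1 ^ 2 + v.2 ^ 2)

/-- The degenerate length `E(γ) = ∫ₐᵇ F(γ(t)) |γ'(t)| dt` of a planar curve. -/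
def degLen (F : ℝ × ℝ → ℝ) (a b : ℝ) (γ : ℝ → ℝ × ℝ) : ℝ :=
  ∫ t in a..b, F (γ t) * enorm2 (deriv γ t)

/-- The signed area `𝒜(γ) = ∫ₐᵇ γ¹(t) (γ²)'(t) dt` of a planar curve. -/
def sArea (a b : ℝ) (γ : ℝ → ℝ × ℝ) : ℝ :=
  ∫ t in a..b, (γ t).1 * deriv (fun s => (γ s).2) t

/-- A locally Lipschitz curve on `[a,b]` joining `p` to `q`. -/
def IsCurve (a b : ℝ) (γ : ℝ → ℝ × ℝ) (p q : ℝ × ℝ) : Prop :=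
  a ≤ b ∧ LocallyLipschitz γ ∧ γ a = p ∧ γ b = q

/-- The standing hypotheses on the potential `W`: smooth, nonnegative, vanishing exactly at the
two distinct wells `pm` and `pp`, with positive definite Hessians there, and bounded away from
zero near infinity (`liminf_{|p|→∞} W(p) > 0`). -/
structure TwoWell (W : ℝ × ℝ → ℝ) (pm pp : ℝ × ℝ) : Prop where
  smooth : ContDiff ℝ (⊤ : ℕ∞) W
  nonneg : ∀ p, 0 ≤ W p
  wells_ne : pm ≠ pp
  zeroSet : ∀ p, W p = 0 ↔ p = pm ∨ p = pp
  hess_m : ∀ v : ℝ × ℝ, v ≠ 0 → 0 < iteratedFDeriv ℝ 2 W pm ![v, v]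
  hess_p : ∀ v : ℝ × ℝ, v ≠ 0 → 0 < iteratedFDeriv ℝ 2 W pp ![v, v]
  coercive : ∃ c > 0, ∃ R : ℝ, ∀ p : ℝ × ℝ, R ≤ ‖p‖ → c ≤ W p

/-- `γ : [a,b] → ℝ²` solves the isoperimetric problem with constraint `A`: it is a locally
Lipschitz curve from `pm` to `pp` with signed area `A` minimizing the degenerate length `E`
among all such curves. -/
def IsoSol (F : ℝ × ℝ → ℝ) (pm pp : ℝ × ℝ) (A : ℝ) (a b : ℝ) (γ : ℝ → ℝ × ℝ) : Prop :=
  IsCurve a b γ pm pp ∧ sArea a b γ = A ∧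
  ∀ a' b' γ', IsCurve a' b' γ' pm pp → sArea a' b' γ' = A →
    degLen F a b γ ≤ degLen F a' b' γ'

/-! The constraint is traded for a penalty. Let `κ = 2 √(1 + b ρ²)` and
`J(γ) = E(γ) + κ |𝒜(γ) - A|`. Near `p₋` the weight `F` is radial, so rotating the initial piece of a
curve, up to its first hitting time of the circle of radius `ρ`, changes neither the length nor the
swept area of that piece; an arc of the circle reconnects it to the rest. Choosing the angle
suitably gives the curve area `A`, and the cost of the arc is exactly `κ |𝒜(γ) - A|`. Hence
correcting a minimizer of `J` over all curves solves the constrained problem.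

To minimize `J`, first replace `F` by `F + η`: this weight is bounded below, so minimizing sequences
have bounded Euclidean length and compactness applies. The lengths of the resulting minimizers are
then bounded uniformly in `η`. Away from the wells `F` is bounded below; each exit from a small ball
around a well costs a definite amount of energy; and inside such a ball `F ≥ m |p - p₋|` with
`κ < 2 m`, since `b < 0` makes the slope of `F` decrease. A piece inside the ball can be replaced by
two radial segments through the center; the swept area lost is at most half of `∫ |p - p₋| |dp|`,
so minimality bounds the energy of the piece by that of the segments, and this differential
inequality for the energy bounds the length. Finally let `η → 0`. -/

/-! ### Integrals along Lipschitz curves -/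

section Curves

variable {E : Type*} [NormedAddCommGroup E] {a b c d : ℝ} {γ δ : ℝ → E} {p q : E}

/-- A Lipschitz curve joining `p` to `q`, parametrized by `[a, b]`. As in `IsCurve`, the curve is
a function on the whole line, of which only the restriction to `[a, b]` matters. -/
structure LipCurve (a b : ℝ) (γ : ℝ → E) (p q : E) : Prop where
  le : a ≤ b
  lipschitz : ∃ K, LipschitzWith K γ
  left : γ a = p
  right : γ b = q

theorem LipCurve.restrict (h : LipCurve a b γ p q) (hcd : c ≤ d) : LipCurve c d γ (γ c) (γ d) :=
  ⟨hcd, h.lipschitz, rfl, rfl⟩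

theorem lipschitzWith_glue {K K' : NNReal} (hγ : LipschitzWith K γ) (hδ : LipschitzWith K' δ)
    (b s : ℝ) (q : E) :
    LipschitzWith (K * 1 + K' * (1 + 0) + 0) fun t => γ (min t b) + δ (max t b + s) - q :=
  ((hγ.comp (LipschitzWith.id.min_const b)).add
    (hδ.comp ((LipschitzWith.id.max_const b).add (LipschitzWith.const s)))).sub
    (LipschitzWith.const q)

theorem continuous_curveLength_integrand :
    Continuous (Function.uncurry fun (_ : E) (v : E) => ‖v‖) := by fun_prop

theorem continuous_weightedLength_integrand {G : E → ℝ} (hG : Continuous G) :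
    Continuous (Function.uncurry fun (z : E) (v : E) => G z * ‖v‖) := by fun_prop

end Curves

section Action

variable {E : Type*} [NormedAddCommGroup E] [NormedSpace ℝ E]

/-- The integral `∫ₐᵇ L(γ, γ') dt` of a Lagrangian `L` along a curve `γ`. -/
def action (L : E → E → ℝ) (a b : ℝ) (γ : ℝ → E) : ℝ :=
  ∫ t in a..b, L (γ t) (deriv γ t)

/-- The length of a curve with respect to the conformal weight `G`. -/
abbrev weightedLength (G : E → ℝ) (a b : ℝ) (γ : ℝ → E) : ℝ :=
  action (fun z v => G z * ‖v‖) a b γ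

/-- The length of a curve. -/
abbrev curveLength (a b : ℝ) (γ : ℝ → E) : ℝ :=
  action (fun _ v => ‖v‖) a b γ

variable {a b c : ℝ} {γ δ : ℝ → E} {K : NNReal} {L : E → E → ℝ} {G H : E → ℝ}

theorem deriv_mem_closedBall_of_lipschitz (hγ : LipschitzWith K γ) (t : ℝ) :
    deriv γ t ∈ Metric.closedBall 0 (K : ℝ) :=
  mem_closedBall_zero_iff.2 (norm_deriv_le_of_lipschitz hγ)

theorem action_shift (L : E → E → ℝ) (a b c : ℝ) (γ : ℝ → E) :
    action L a b (fun t => γ (t + c)) = action L (a + c) (b + c) γ := by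
  simp only [action, deriv_comp_add_const]
  exact intervalIntegral.integral_comp_add_right (fun t => L (γ t) (deriv γ t)) c

theorem action_comp_neg (hL : ∀ z v, L z (-v) = L z v) (a b : ℝ) (γ : ℝ → E) :
    action L a b (fun t => γ (-t)) = action L (-b) (-a) γ := by
  simp only [action, deriv_comp_neg, hL]
  exact intervalIntegral.integral_comp_neg (fun t => L (γ t) (deriv γ t))

theorem action_congr_Ioo (hab : a ≤ b) (h : EqOn γ δ (Ioo a b)) :
    action L a b γ = action L a b δ := by
  refine intervalIntegral.integral_congr_Ioo_of_le hab fun t ht => ?_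
  have hnhds : γ =ᶠ[𝓝 t] δ := eventuallyEq_of_mem (isOpen_Ioo.mem_nhds ht) h
  simp only [h ht, hnhds.deriv_eq]

theorem weightedLength_nonneg (hG : ∀ z, 0 ≤ G z) (hab : a ≤ b) (γ : ℝ → E) :
    0 ≤ weightedLength G a b γ :=
  intervalIntegral.integral_nonneg hab fun _ _ => mul_nonneg (hG _) (norm_nonneg _)

theorem curveLength_nonneg (hab : a ≤ b) (γ : ℝ → E) : 0 ≤ curveLength a b γ :=
  intervalIntegral.integral_nonneg hab fun _ _ => norm_nonneg _

variable [FiniteDimensional ℝ E]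

theorem intervalIntegrable_comp_deriv {X : Type*} [PseudoMetricSpace X] {L : X → E → ℝ}
    (hL : Continuous (Function.uncurry L)) {φ : ℝ → X} (hφ : Continuous φ)
    (hγ : LipschitzWith K γ) (a b : ℝ) :
    IntervalIntegrable (fun t => L (φ t) (deriv γ t)) volume a b := by
  have hmeas : StronglyMeasurable fun t => L (φ t) (deriv γ t) :=
    hL.comp_stronglyMeasurable (hφ.stronglyMeasurable.prodMk (stronglyMeasurable_deriv γ))
  have hcompact : IsCompact ((φ '' uIcc a b) ×ˢ Metric.closedBall (0 : E) K) :=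
    (isCompact_uIcc.image hφ).prod (isCompact_closedBall 0 _)
  obtain ⟨C, hC⟩ := hcompact.exists_bound_of_continuousOn hL.continuousOn
  refine (intervalIntegrable_const (c := C)).mono_fun' hmeas.aestronglyMeasurable ?_
  refine (ae_restrict_iff' measurableSet_uIoc).2 (Eventually.of_forall fun t ht => ?_)
  exact hC (φ t, deriv γ t)
    ⟨mem_image_of_mem φ (uIoc_subset_uIcc ht), deriv_mem_closedBall_of_lipschitz hγ t⟩

theorem intervalIntegrable_action (hL : Continuous (Function.uncurry L))
    (hγ : LipschitzWith K γ) (a b : ℝ) :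
    IntervalIntegrable (fun t => L (γ t) (deriv γ t)) volume a b :=
  intervalIntegrable_comp_deriv hL hγ.continuous hγ a b

theorem action_add_adjacent (hL : Continuous (Function.uncurry L)) (hγ : LipschitzWith K γ)
    (a b c : ℝ) : action L a b γ + action L b c γ = action L a c γ :=
  intervalIntegral.integral_add_adjacent_intervals
    (intervalIntegrable_action hL hγ _ _) (intervalIntegrable_action hL hγ _ _)

theorem action_mono {L' : E → E → ℝ} (hL : Continuous (Function.uncurry L))
    (hL' : Continuous (Function.uncurry L')) (hγ : LipschitzWith K γ) (hab : a ≤ b)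
    (h : ∀ t ∈ Icc a b, ∀ v, L (γ t) v ≤ L' (γ t) v) : action L a b γ ≤ action L' a b γ :=
  intervalIntegral.integral_mono_on hab (intervalIntegrable_action hL hγ _ _)
    (intervalIntegrable_action hL' hγ _ _) fun t ht => h t ht _

theorem weightedLength_add_const (hG : Continuous G) (hγ : LipschitzWith K γ) (η : ℝ) :
    weightedLength (fun z => G z + η) a b γ = weightedLength G a b γ + η * curveLength a b γ := by
  have hsplit : (fun t => (G (γ t) + η) * ‖deriv γ t‖) =
      fun t => G (γ t) * ‖deriv γ t‖ + η * ‖deriv γ t‖ := funext fun t => add_mul _ _ _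
  rw [weightedLength, action, hsplit, intervalIntegral.integral_add
    (intervalIntegrable_action (continuous_weightedLength_integrand hG) hγ a b)
    ((intervalIntegrable_action continuous_curveLength_integrand hγ a b).const_mul η),
    intervalIntegral.integral_const_mul]
  rfl

theorem mul_curveLength_le_weightedLength (hG : Continuous G) (hγ : LipschitzWith K γ)
    (hab : a ≤ b) (h : ∀ t ∈ Icc a b, c ≤ G (γ t)) :
    c * curveLength a b γ ≤ weightedLength G a b γ := by
  rw [curveLength, action, ← intervalIntegral.integral_const_mul]
  exact action_mono (L := fun _ v => c * ‖v‖) (by fun_prop)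
    (continuous_weightedLength_integrand hG) hγ hab
    fun t ht v => mul_le_mul_of_nonneg_right (h t ht) (norm_nonneg v)

theorem abs_action_le_of_abs_le {L' : E → E → ℝ} (hL' : Continuous (Function.uncurry L'))
    (hγ : LipschitzWith K γ) (hab : a ≤ b)
    (h : ∀ t ∈ Icc a b, ∀ v, |L (γ t) v| ≤ L' (γ t) v) : |action L a b γ| ≤ action L' a b γ :=
  intervalIntegral.norm_integral_le_of_norm_le (f := fun t => L (γ t) (deriv γ t)) hab
    (Eventually.of_forall fun t ht => h t (Ioc_subset_Icc_self ht) _)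
    (intervalIntegrable_action hL' hγ a b)

end Action

namespace LipCurve

variable {E : Type*} [NormedAddCommGroup E] [NormedSpace ℝ E]
  {a b c d : ℝ} {γ δ : ℝ → E} {p q r : E}

theorem exists_concat [FiniteDimensional ℝ E] (hγ : LipCurve a b γ p q)
    (hδ : LipCurve c d δ q r) :
    ∃ e ε, LipCurve a e ε p r ∧ ∀ L : E → E → ℝ, Continuous (Function.uncurry L) →
      action L a e ε = action L a b γ + action L c d δ := by
  obtain ⟨K, hK⟩ := hγ.lipschitz
  obtain ⟨K', hK'⟩ := hδ.lipschitz
  set ε : ℝ → E := fun t => γ (min t b) + δ (max t b + (c - b)) - q with hε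
  have hlip := lipschitzWith_glue hK hK' b (c - b) q
  have hbe : b ≤ b + (d - c) := by linarith [hδ.le]
  have hfst : ∀ t ≤ b, ε t = γ t := fun t ht => by
    simp [hε, min_eq_left ht, max_eq_right ht, hδ.left]
  have hsnd : ∀ t ≥ b, ε t = δ (t + (c - b)) := fun t ht => by
    simp [hε, min_eq_right ht, max_eq_left ht, hγ.right]
  refine ⟨b + (d - c), ε, ⟨hγ.le.trans hbe, ⟨_, hlip⟩, ?_, ?_⟩, fun L hL => ?_⟩
  · rw [hfst a hγ.le, hγ.left]
  · rw [hsnd _ hbe, ← hδ.right]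
    ring_nf
  · rw [← action_add_adjacent hL hlip a b, action_congr_Ioo hγ.le fun t ht => hfst t ht.2.le,
      action_congr_Ioo hbe fun t ht => hsnd t ht.1.le, action_shift]
    ring_nf

end LipCurve

/-! ### Integration by parts and swept area -/

section Area

variable {E : Type*} [NormedAddCommGroup E] [NormedSpace ℝ E] (B : E →L[ℝ] E →L[ℝ] ℝ)

/-- The area `∫ₐᵇ B(γ, γ') dt` of a curve; for `B(z, v) = z¹ v²` this is the signed area. -/
abbrev bilinArea (a b : ℝ) (γ : ℝ → E) : ℝ :=
  action (fun z v => B z v) a b γ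

/-- The area swept by the segment from `p` to the moving point `γ t`, measured with the
antisymmetrization of `B`. -/
abbrev sweptArea (p : E) (a b : ℝ) (γ : ℝ → E) : ℝ :=
  action (fun z v => 1 / 2 * (B (z - p) v - B v (z - p))) a b γ

theorem continuous_bilinArea_integrand :
    Continuous (Function.uncurry fun z v : E => B z v) := by fun_prop

theorem continuous_sweptArea_integrand (p : E) :
    Continuous (Function.uncurry fun z v : E => 1 / 2 * (B (z - p) v - B v (z - p))) := by
  fun_prop

/-- The amount by which area and swept area about `p` differ, as a function of the endpoint. -/
def areaPotential (p z : E) : ℝ := 1 / 2 * B (z - p) (z - p) + B p z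

theorem deriv_lineMap (z w : E) (t : ℝ) :
    deriv (AffineMap.lineMap z w : ℝ → E) t = w - z :=
  AffineMap.hasDerivAt_lineMap.deriv

theorem lipCurve_lineMap (z w : E) : LipCurve 0 1 (AffineMap.lineMap z w : ℝ → E) z w :=
  ⟨zero_le_one, ⟨_, lipschitzWith_lineMap z w⟩, AffineMap.lineMap_apply_zero z w,
    AffineMap.lineMap_apply_one z w⟩

theorem weightedLength_lineMap_le {G : E → ℝ} (hG : Continuous G) {M : ℝ} {z w : E}
    (h : ∀ t ∈ Icc (0 : ℝ) 1, G (AffineMap.lineMap z w t) ≤ M) :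
    weightedLength G 0 1 (AffineMap.lineMap z w : ℝ → E) ≤ M * ‖w - z‖ := by
  simp only [weightedLength, action, deriv_lineMap]
  calc ∫ t in (0 : ℝ)..1, G (AffineMap.lineMap z w t) * ‖w - z‖
      ≤ ∫ _ in (0 : ℝ)..1, M * ‖w - z‖ :=
        intervalIntegral.integral_mono_on zero_le_one
          (Continuous.intervalIntegrable (by fun_prop) _ _) intervalIntegrable_const
          fun t ht => mul_le_mul_of_nonneg_right (h t ht) (norm_nonneg _)
    _ = M * ‖w - z‖ := by simp

theorem sweptArea_lineMap (p z w : E) :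
    sweptArea B p 0 1 (AffineMap.lineMap z w : ℝ → E) =
      1 / 2 * (B (z - p) (w - z) - B (w - z) (z - p)) := by
  have hconst : ∀ t : ℝ, B (AffineMap.lineMap z w t - p) (w - z) -
      B (w - z) (AffineMap.lineMap z w t - p) = B (z - p) (w - z) - B (w - z) (z - p) := fun t => by
    have : AffineMap.lineMap z w t - p = t • (w - z) + (z - p) := by
      rw [AffineMap.lineMap_apply_module']; abel
    simp only [this, map_add, map_smul, add_apply,
      smul_apply]
    ring
  simp only [sweptArea, action, deriv_lineMap, hconst, intervalIntegral.integral_const, sub_zero,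
    one_smul]

end Area

section Calculus

variable {E : Type*} [NormedAddCommGroup E] [NormedSpace ℝ E] [FiniteDimensional ℝ E]
  {a b : ℝ} {γ δ : ℝ → E} {K K' : NNReal} (B : E →L[ℝ] E →L[ℝ] ℝ)

theorem integral_eq_sub_of_locallyLipschitz_of_ae_hasDerivAt {f f' : ℝ → ℝ}
    (hf : LocallyLipschitz f) (hf' : ∀ᵐ t, HasDerivAt f (f' t) t) (a b : ℝ) :
    ∫ t in a..b, f' t = f b - f a := by
  obtain ⟨C, hC⟩ :=
    (hf.locallyLipschitzOn (s := uIcc a b)).exists_lipschitzOnWith_of_compact isCompact_uIcc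
  rw [← hC.absolutelyContinuousOnInterval.integral_deriv_eq_sub]
  refine intervalIntegral.integral_congr_ae ?_
  filter_upwards [hf'] with t ht _ using ht.deriv.symm

theorem integral_clm_deriv (ℓ : E →L[ℝ] ℝ) (hγ : LipschitzWith K γ) (a b : ℝ) :
    ∫ t in a..b, ℓ (deriv γ t) = ℓ (γ b) - ℓ (γ a) := by
  refine integral_eq_sub_of_locallyLipschitz_of_ae_hasDerivAt
    (f := fun t => ℓ (γ t)) (ℓ.lipschitz.comp hγ).locallyLipschitz ?_ a b
  filter_upwards [hγ.ae_differentiableAt_real] with t ht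
  exact ℓ.hasFDerivAt.comp_hasDerivAt t ht.hasDerivAt

theorem integral_bilin_deriv_add (hγ : LipschitzWith K γ) (hδ : LipschitzWith K' δ) (a b : ℝ) :
    ∫ t in a..b, (B (γ t) (deriv δ t) + B (deriv γ t) (δ t)) =
      B (γ b) (δ b) - B (γ a) (δ a) := by
  refine integral_eq_sub_of_locallyLipschitz_of_ae_hasDerivAt (f := fun t => B (γ t) (δ t))
    ?_ ?_ a b
  · exact (B.isBoundedBilinearMap.contDiff (n := 1)).locallyLipschitz.comp
      (hγ.prodMk hδ).locallyLipschitz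
  · filter_upwards [hγ.ae_differentiableAt_real, hδ.ae_differentiableAt_real] with t ht ht'
    exact B.hasDerivAt_of_bilinear (fun _ => ht.hasDerivAt) fun _ => ht'.hasDerivAt

theorem norm_sub_le_curveLength (hγ : LipschitzWith K γ) (hab : a ≤ b) :
    ‖γ b - γ a‖ ≤ curveLength a b γ := by
  obtain ⟨ℓ, hℓ, hval⟩ := exists_dual_vector'' ℝ (γ b - γ a)
  calc ‖γ b - γ a‖ = ∫ t in a..b, ℓ (deriv γ t) := by
        rw [integral_clm_deriv ℓ hγ, ← map_sub, hval]; rfl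
    _ ≤ |action (fun _ v => ℓ v) a b γ| := le_abs_self _
    _ ≤ curveLength a b γ :=
        abs_action_le_of_abs_le continuous_curveLength_integrand hγ hab fun _ _ v =>
          ℓ.le_of_opNorm_le_of_le hℓ le_rfl |>.trans_eq (one_mul _)

theorem bilinArea_eq_sweptArea_add (p : E) (hγ : LipschitzWith K γ) (a b : ℝ) :
    bilinArea B a b γ =
      sweptArea B p a b γ + (areaPotential B p (γ b) - areaPotential B p (γ a)) := by
  have hγp : LipschitzWith (K + 0) fun t => γ t - p := hγ.sub (LipschitzWith.const p)
  have hparts := integral_bilin_deriv_add B hγp hγp a b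
  have hlin := integral_clm_deriv (B p) hγ a b
  simp only [deriv_sub_const] at hparts
  have hsplit : ∀ t, B (γ t) (deriv γ t) =
      1 / 2 * (B (γ t - p) (deriv γ t) - B (deriv γ t) (γ t - p)) +
        (1 / 2 * (B (γ t - p) (deriv γ t) + B (deriv γ t) (γ t - p)) + B p (deriv γ t)) :=
    fun t => by simp only [map_sub, sub_apply]; ring
  have hint₁ := intervalIntegrable_action (continuous_sweptArea_integrand B p) hγ a b
  have hint₂ := intervalIntegrable_action
    (L := fun z v => 1 / 2 * (B (z - p) v + B v (z - p))) (by fun_prop) hγ a b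
  have hint₃ := intervalIntegrable_action (L := fun _ v => B p v) (by fun_prop) hγ a b
  simp only [bilinArea, sweptArea, action, hsplit]
  rw [intervalIntegral.integral_add hint₁ (hint₂.add hint₃),
    intervalIntegral.integral_add hint₂ hint₃,
    intervalIntegral.integral_const_mul (1 / 2) fun t =>
      B (γ t - p) (deriv γ t) + B (deriv γ t) (γ t - p), hparts, hlin, areaPotential,
    areaPotential]
  ring

theorem abs_sweptArea_le {B} (hB : ∀ u v, |B u v - B v u| ≤ ‖u‖ * ‖v‖) (p : E)
    (hγ : LipschitzWith K γ) (hab : a ≤ b) :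
    |sweptArea B p a b γ| ≤ 1 / 2 * weightedLength (fun z => ‖z - p‖) a b γ := by
  rw [weightedLength, action, ← intervalIntegral.integral_const_mul]
  refine abs_action_le_of_abs_le (L' := fun z v => 1 / 2 * (‖z - p‖ * ‖v‖)) (by fun_prop) hγ hab
    fun t _ v => ?_
  rw [abs_mul, abs_of_pos one_half_pos]
  exact mul_le_mul_of_nonneg_left (hB _ _) one_half_pos.le

end Calculus

/-! ### Reparametrization -/

section Reparametrization

theorem volume_image_eq_zero_of_lipschitz {K : NNReal} {f : ℝ → ℝ} (hf : LipschitzWith K f)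
    {s : Set ℝ} (hs : volume s = 0) : volume (f '' s) = 0 := by
  have hle := hf.hausdorffMeasure_image_le (d := 1) zero_le_one s
  rw [hausdorffMeasure_real, hs, mul_zero] at hle
  exact nonpos_iff_eq_zero.1 hle

theorem integral_deriv_mul_comp_orderIso {K : NNReal} {τ : ℝ ≃o ℝ} (hτ : LipschitzWith K τ)
    {a b : ℝ} (hab : a ≤ b) (g : ℝ → ℝ) :
    ∫ u in a..b, deriv τ u * g (τ u) = ∫ t in τ a..τ b, g t := by
  set s := {u | DifferentiableAt ℝ τ u}
  have hs : MeasurableSet (Ioc a b ∩ s) :=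
    measurableSet_Ioc.inter (measurableSet_of_differentiableAt ℝ τ)
  have hnull : volume sᶜ = 0 := hτ.ae_differentiableAt_real
  have hdomain : (Ioc a b ∩ s : Set ℝ) =ᵐ[volume] Ioc a b :=
    inter_ae_eq_left_of_ae_eq_univ (eventuallyEq_univ.2 (mem_ae_iff.2 hnull))
  have hrange : (τ '' (Ioc a b ∩ s) : Set ℝ) =ᵐ[volume] Ioc (τ a) (τ b) := by
    rw [image_inter τ.injective, τ.image_Ioc]
    refine inter_ae_eq_left_of_ae_eq_univ (eventuallyEq_univ.2 (mem_ae_iff.2 ?_))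
    rw [← image_compl_eq τ.bijective]
    exact volume_image_eq_zero_of_lipschitz hτ hnull
  rw [intervalIntegral.integral_of_le hab, intervalIntegral.integral_of_le (τ.monotone hab),
    ← setIntegral_congr_set hrange, ← setIntegral_congr_set hdomain]
  exact (integral_image_eq_integral_deriv_smul_of_monotoneOn hs
    (fun u hu => hu.2.hasDerivAt.hasDerivWithinAt) (τ.monotone.monotoneOn _) g).symm

theorem lipschitzWith_of_dist_le_mul_of_le {X : Type*} [PseudoMetricSpace X] {f : ℝ → X}
    {K : NNReal} (h : ∀ s t, s ≤ t → dist (f s) (f t) ≤ K * (t - s)) : LipschitzWith K f := by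
  refine LipschitzWith.of_dist_le_mul fun s t => ?_
  rcases le_total s t with hst | hts
  · simpa only [dist_comm s t, Real.dist_eq, abs_of_nonneg (sub_nonneg.2 hst)] using h s t hst
  · simpa only [dist_comm (f s), Real.dist_eq, abs_of_nonneg (sub_nonneg.2 hts)] using h t s hts

theorem exists_orderIso_of_slope_bounds {σ : ℝ → ℝ} {c : ℝ} {C : NNReal} (hc : 0 < c)
    (hlow : ∀ s t, s ≤ t → c * (t - s) ≤ σ t - σ s)
    (hup : ∀ s t, s ≤ t → σ t - σ s ≤ C * (t - s)) :
    ∃ e : ℝ ≃o ℝ, ⇑e = σ ∧ LipschitzWith C e ∧ LipschitzWith c⁻¹.toNNReal e.symm := by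
  have hmono : StrictMono σ := fun s t hst => by
    linarith [hlow s t hst.le, mul_pos hc (sub_pos.2 hst)]
  have hlip : LipschitzWith C σ := lipschitzWith_of_dist_le_mul_of_le fun s t hst => by
    rw [dist_comm, Real.dist_eq, abs_of_nonneg (sub_nonneg.2 (hmono.monotone hst))]
    exact hup s t hst
  have htop : Tendsto σ atTop atTop := by
    refine tendsto_atTop_mono' _ ?_ (tendsto_atTop_add_const_left _ (σ 0)
      (tendsto_id.const_mul_atTop hc))
    filter_upwards [eventually_ge_atTop 0] with t ht
    simpa using by linarith [hlow 0 t ht]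
  have hbot : Tendsto σ atBot atBot := by
    refine tendsto_atBot_mono' _ ?_ (tendsto_atBot_add_const_left _ (σ 0)
      (tendsto_id.const_mul_atBot hc))
    filter_upwards [eventually_le_atBot 0] with t ht
    simpa using by linarith [hlow t 0 ht]
  let e := hmono.orderIsoOfSurjective σ (hlip.continuous.surjective htop hbot)
  refine ⟨e, rfl, hlip, lipschitzWith_of_dist_le_mul_of_le fun u v huv => ?_⟩
  have hsymm : e.symm u ≤ e.symm v := e.symm.monotone huv
  have hslope := hlow _ _ hsymm
  rw [show σ (e.symm v) = v from e.apply_symm_apply v,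
    show σ (e.symm u) = u from e.apply_symm_apply u] at hslope
  rw [dist_comm, Real.dist_eq, abs_of_nonneg (sub_nonneg.2 hsymm),
    Real.coe_toNNReal _ (inv_nonneg.2 hc.le)]
  exact (le_inv_mul_iff₀ hc).2 hslope

variable {E : Type*} [NormedAddCommGroup E] [NormedSpace ℝ E] [FiniteDimensional ℝ E]
  {a b : ℝ} {γ : ℝ → E} {K : NNReal}

theorem action_comp_orderIso {L : E → E → ℝ}
    (hL : ∀ z v (c : ℝ), 0 ≤ c → L z (c • v) = c * L z v) (hγ : LipschitzWith K γ)
    {τ : ℝ ≃o ℝ} {C C' : NNReal} (hτ : LipschitzWith C τ) (hτ' : LipschitzWith C' τ.symm)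
    (hab : a ≤ b) : action L a b (γ ∘ τ) = action L (τ a) (τ b) γ := by
  rw [action, action, ← integral_deriv_mul_comp_orderIso hτ hab]
  have hγτ : ∀ᵐ u, DifferentiableAt ℝ γ (τ u) := by
    have hnull := volume_image_eq_zero_of_lipschitz hτ' hγ.ae_differentiableAt_real
    rw [τ.symm.image_eq_preimage_symm] at hnull
    exact hnull
  refine intervalIntegral.integral_congr_ae ?_
  filter_upwards [hγτ, hτ.ae_differentiableAt_real] with u hγu hτu _
  rw [deriv.scomp u hγu hτu, hL _ _ _ τ.monotone.deriv_nonneg, Function.comp_apply]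

theorem curveLength_le_mul_sub (hγ : LipschitzWith K γ) (hab : a ≤ b) :
    curveLength a b γ ≤ K * (b - a) := by
  have hle := intervalIntegral.integral_mono_on hab
    (intervalIntegrable_action continuous_curveLength_integrand hγ a b)
    (intervalIntegrable_const (c := (K : ℝ))) fun t _ => norm_deriv_le_of_lipschitz hγ
  simpa [mul_comm, action] using hle

theorem exists_orderIso_arclength (hγ : LipschitzWith K γ) (hab : a < b) :
    ∃ σ : ℝ ≃o ℝ, (∃ C, LipschitzWith C σ) ∧ (∃ C, LipschitzWith C σ.symm) ∧
      σ a = 0 ∧ σ b = 1 ∧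
      ∀ s t, s ≤ t → ‖γ t - γ s‖ ≤ (curveLength a b γ + 1) * (σ t - σ s) := by
  set M := curveLength a b γ + 1
  have hM : 0 < M := by linarith [curveLength_nonneg hab.le γ]
  have hba : 0 < b - a := sub_pos.2 hab
  set σ : ℝ → ℝ := fun t => (curveLength a t γ + (t - a) / (b - a)) / M
  have hincr : ∀ s t, M * (σ t - σ s) = curveLength s t γ + (t - s) / (b - a) := fun s t => by
    have hadd := action_add_adjacent continuous_curveLength_integrand hγ a s t
    rw [mul_sub, mul_div_cancel₀ _ hM.ne', mul_div_cancel₀ _ hM.ne', curveLength, ← hadd]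
    ring
  obtain ⟨e, he, hlip, hlip'⟩ := exists_orderIso_of_slope_bounds (σ := σ)
      (c := ((b - a) * M)⁻¹) (C := ((K + (b - a)⁻¹) / M).toNNReal) (by positivity)
      (fun s t hst => by
        rw [← mul_le_mul_iff_right₀ hM, hincr, ← mul_assoc, mul_inv, mul_comm M,
          inv_mul_cancel_right₀ hM.ne', inv_mul_eq_div]
        linarith [curveLength_nonneg hst γ])
      (fun s t hst => by
        rw [← mul_le_mul_iff_right₀ hM, hincr, Real.coe_toNNReal _ (by positivity), ← mul_assoc,
          mul_div_cancel₀ _ hM.ne', add_mul, inv_mul_eq_div]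
        linarith [curveLength_le_mul_sub hγ hst])
  refine ⟨e, ⟨_, hlip⟩, ⟨_, hlip'⟩, ?_, ?_, fun s t hst => ?_⟩
  · simp [he, σ, action]
  · simp [he, σ, hba.ne', hM.ne', M]
  · rw [he, hincr]
    linarith [norm_sub_le_curveLength hγ hst, div_nonneg (sub_nonneg.2 hst) hba.le]

theorem LipCurve.exists_reparam {p q : E} (h : LipCurve a b γ p q) :
    ∃ δ, LipschitzWith (curveLength a b γ + 1).toNNReal δ ∧ LipCurve 0 1 δ p q ∧
      ∀ L : E → E → ℝ, (∀ z v (c : ℝ), 0 ≤ c → L z (c • v) = c * L z v) →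
        action L 0 1 δ = action L a b γ := by
  rcases h.le.eq_or_lt with rfl | hab
  · refine ⟨fun _ => p, LipschitzWith.const' p,
      ⟨zero_le_one, ⟨0, LipschitzWith.const p⟩, rfl, h.left.symm.trans h.right⟩, fun L hL => ?_⟩
    simpa [action] using hL p 0 0 le_rfl
  obtain ⟨K, hK⟩ := h.lipschitz
  obtain ⟨σ, ⟨C, hC⟩, ⟨C', hC'⟩, h0, h1, hσ⟩ := exists_orderIso_arclength hK hab
  have hlip : LipschitzWith (curveLength a b γ + 1).toNNReal (γ ∘ σ.symm) :=
    lipschitzWith_of_dist_le_mul_of_le fun u v huv => by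
      rw [dist_comm, dist_eq_norm, Real.coe_toNNReal _ (by linarith [curveLength_nonneg h.le γ])]
      simpa using hσ _ _ (σ.symm.monotone huv)
  have h0' : σ.symm 0 = a := by rw [← h0, σ.symm_apply_apply]
  have h1' : σ.symm 1 = b := by rw [← h1, σ.symm_apply_apply]
  refine ⟨γ ∘ σ.symm, hlip, ⟨zero_le_one, ⟨_, hlip⟩, ?_, ?_⟩, fun L hL => ?_⟩
  · rw [Function.comp_apply, h0', h.left]
  · rw [Function.comp_apply, h1', h.right]
  · rw [action_comp_orderIso hL hK hC' (by rwa [σ.symm_symm]) zero_le_one, h0', h1']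

end Reparametrization

/-! ### Limits of equi-Lipschitz curves -/

section Limits

variable {E : Type*} [NormedAddCommGroup E] {a b : ℝ} {γs : ℕ → ℝ → E} {γ : ℝ → E} {K : NNReal}

theorem exists_norm_bound_of_lipschitz_of_tendsto (hγs : ∀ n, LipschitzWith K (γs n))
    (hlim : ∀ t ∈ uIcc a b, Tendsto (γs · t) atTop (𝓝 (γ t))) :
    ∃ R, ∀ n, ∀ t ∈ uIcc a b, ‖γs n t‖ ≤ R := by
  obtain ⟨R, hR⟩ := (hlim a left_mem_uIcc).norm.bddAbove_range
  refine ⟨R + K * |b - a|, fun n t ht => ?_⟩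
  calc ‖γs n t‖ ≤ ‖γs n a‖ + ‖γs n t - γs n a‖ := norm_le_insert' _ _
    _ ≤ R + K * |b - a| := by
      gcongr
      · exact hR ⟨n, rfl⟩
      · rw [← dist_eq_norm]
        exact ((hγs n).dist_le_mul t a).trans
          (mul_le_mul_of_nonneg_left (abs_sub_left_of_mem_uIcc ht) K.coe_nonneg)

theorem tendsto_sub_of_continuous_of_mem_isCompact {L : E → E → ℝ}
    (hL : Continuous (Function.uncurry L)) {zs vs : ℕ → E} {z : E}
    (hzs : Tendsto zs atTop (𝓝 z)) {s : Set E} (hs : IsCompact s) (hvs : ∀ n, vs n ∈ s) :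
    Tendsto (fun n => L (zs n) (vs n) - L z (vs n)) atTop (𝓝 0) := by
  rw [Metric.tendsto_nhds]
  intro ε hε
  obtain ⟨V, hV, hclose⟩ := hs.mem_uniformity_of_prod (f := L) hL.continuousOn (mem_univ z)
    (Metric.dist_mem_uniformity hε)
  rw [nhdsWithin_univ] at hV
  filter_upwards [hzs hV] with n hn
  simpa [Real.dist_eq] using hclose _ hn _ (hvs n)

variable [NormedSpace ℝ E]

theorem exists_lipschitz_integral_norm_sub_le {ψ : ℝ → E} (hab : a ≤ b)
    (hψ : IntervalIntegrable ψ volume a b) {ε : ℝ} (hε : 0 < ε) :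
    ∃ (φ : ℝ → E) (C : NNReal), LipschitzWith C φ ∧ ∫ t in a..b, ‖ψ t - φ t‖ ≤ ε := by
  have hψ' : IntegrableOn ψ (Ioc a b) := (intervalIntegrable_iff_integrableOn_Ioc_of_le hab).1 hψ
  obtain ⟨φ, hφsupp, hφ, hle⟩ := (memLp_one_iff_integrable.2 hψ').exist_eLpNorm_sub_le
    ENNReal.one_ne_top le_rfl hε
  obtain ⟨C, hC⟩ := hφ.lipschitzWith_of_hasCompactSupport hφsupp (by simp)
  refine ⟨φ, C, hC, ?_⟩
  have hintegrable : IntegrableOn (ψ - φ) (Ioc a b) :=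
    hψ'.sub (hC.continuous.integrableOn_Ioc)
  rw [intervalIntegral.integral_of_le hab, ← ENNReal.ofReal_le_ofReal_iff hε.le]
  rw [eLpNorm_one_eq_lintegral_enorm, ← ofReal_integral_norm_eq_lintegral_enorm hintegrable] at hle
  exact hle

variable [FiniteDimensional ℝ E]

theorem tendsto_action_sub_frozen {L : E → E → ℝ} (hL : Continuous (Function.uncurry L))
    (hγs : ∀ n, LipschitzWith K (γs n)) (hγ : Continuous γ)
    (hlim : ∀ t ∈ uIcc a b, Tendsto (γs · t) atTop (𝓝 (γ t))) :
    Tendsto (fun n => ∫ t in a..b, (L (γs n t) (deriv (γs n) t) - L (γ t) (deriv (γs n) t)))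
      atTop (𝓝 0) := by
  obtain ⟨R, hR⟩ := exists_norm_bound_of_lipschitz_of_tendsto hγs hlim
  obtain ⟨C, hC⟩ := ((isCompact_closedBall (0 : E) R).prod
    (isCompact_closedBall (0 : E) K)).exists_bound_of_continuousOn hL.continuousOn
  have hR' : ∀ t ∈ uIcc a b, ‖γ t‖ ≤ R := fun t ht =>
    le_of_tendsto (hlim t ht).norm (Eventually.of_forall fun n => hR n t ht)
  have hderiv n t := deriv_mem_closedBall_of_lipschitz (hγs n) t
  rw [show (0 : ℝ) = ∫ _ in a..b, (0 : ℝ) by simp]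
  refine intervalIntegral.tendsto_integral_filter_of_dominated_convergence (fun _ => C + C)
    (Eventually.of_forall fun n => ?_)
    (Eventually.of_forall fun n => Eventually.of_forall fun t ht => ?_)
    intervalIntegrable_const (Eventually.of_forall fun t ht => ?_)
  · exact ((intervalIntegrable_action hL (hγs n) a b).sub
      (intervalIntegrable_comp_deriv hL hγ (hγs n) a b)).aestronglyMeasurable_restrict_uIoc
  · have ht' := uIoc_subset_uIcc ht
    exact (norm_sub_le _ _).trans (add_le_add
      (hC (γs n t, _) ⟨mem_closedBall_zero_iff.2 (hR n t ht'), hderiv n t⟩)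
      (hC (γ t, _) ⟨mem_closedBall_zero_iff.2 (hR' t ht'), hderiv n t⟩))
  · exact tendsto_sub_of_continuous_of_mem_isCompact hL (hlim t (uIoc_subset_uIcc ht))
      (isCompact_closedBall 0 (K : ℝ)) (hderiv · t)

theorem tendsto_integral_bilin_deriv (B : E →L[ℝ] E →L[ℝ] ℝ)
    (hγs : ∀ n, LipschitzWith K (γs n)) (hγ : LipschitzWith K γ)
    (hlim : ∀ t ∈ uIcc a b, Tendsto (γs · t) atTop (𝓝 (γ t)))
    {φ : ℝ → E} {C : NNReal} (hφ : LipschitzWith C φ) :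
    Tendsto (fun n => ∫ t in a..b, B (φ t) (deriv (γs n) t)) atTop
      (𝓝 (∫ t in a..b, B (φ t) (deriv γ t))) := by
  have hB : Continuous (Function.uncurry fun z v => B z v) := continuous_bilinArea_integrand B
  have hB' : Continuous (Function.uncurry fun z v => B v z) := by fun_prop
  have hparts : ∀ δ : ℝ → E, LipschitzWith K δ → ∫ t in a..b, B (φ t) (deriv δ t) =
      B (φ b) (δ b) - B (φ a) (δ a) - ∫ t in a..b, B (deriv φ t) (δ t) := fun δ hδ => by
    rw [← integral_bilin_deriv_add B hφ hδ, intervalIntegral.integral_add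
      (intervalIntegrable_comp_deriv hB hφ.continuous hδ a b)
      (intervalIntegrable_comp_deriv hB' hδ.continuous hφ a b), add_sub_cancel_right]
  simp only [hparts _ (hγs _), hparts _ hγ]
  refine Tendsto.sub (Tendsto.sub (((B (φ b)).continuous.tendsto _).comp (hlim b right_mem_uIcc))
    (((B (φ a)).continuous.tendsto _).comp (hlim a left_mem_uIcc))) ?_
  obtain ⟨R, hR⟩ := exists_norm_bound_of_lipschitz_of_tendsto hγs hlim
  refine intervalIntegral.tendsto_integral_filter_of_dominated_convergence
    (fun _ => ‖B‖ * C * R) (Eventually.of_forall fun n => ?_)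
    (Eventually.of_forall fun n => Eventually.of_forall fun t ht => ?_)
    intervalIntegrable_const (Eventually.of_forall fun t ht => ?_)
  · exact (intervalIntegrable_comp_deriv hB' (hγs n).continuous hφ
      a b).aestronglyMeasurable_restrict_uIoc
  · have hRt := hR n t (uIoc_subset_uIcc ht)
    exact (B.le_opNorm₂ _ _).trans (by gcongr; exact norm_deriv_le_of_lipschitz hφ)
  · exact ((B (deriv φ t)).continuous.tendsto _).comp (hlim t (uIoc_subset_uIcc ht))

theorem tendsto_bilinArea (B : E →L[ℝ] E →L[ℝ] ℝ)
    (hγs : ∀ n, LipschitzWith K (γs n)) (hγ : LipschitzWith K γ)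
    (hlim : ∀ t ∈ uIcc a b, Tendsto (γs · t) atTop (𝓝 (γ t))) :
    Tendsto (fun n => bilinArea B a b (γs n)) atTop (𝓝 (bilinArea B a b γ)) := by
  have hB := continuous_bilinArea_integrand B
  have hsum := (tendsto_action_sub_frozen hB hγs hγ.continuous hlim).add
    (tendsto_integral_bilin_deriv B hγs hγ hlim hγ)
  rw [zero_add] at hsum
  refine hsum.congr fun n => ?_
  rw [intervalIntegral.integral_sub (intervalIntegrable_action hB (hγs n) a b)
    (intervalIntegrable_comp_deriv hB hγ.continuous (hγs n) a b), sub_add_cancel]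
  rfl

theorem exists_subseq_tendsto_of_lipschitz {z : E} (hγs : ∀ n, LipschitzWith K (γs n))
    (h0 : ∀ n, γs n a = z) (hab : a ≤ b) :
    ∃ γ, LipschitzWith K γ ∧ ∃ φ : ℕ → ℕ, StrictMono φ ∧
      ∀ t ∈ uIcc a b, Tendsto (fun n => γs (φ n) t) atTop (𝓝 (γ t)) := by
  let ι : C(Icc a b, ℝ) := ⟨Subtype.val, continuous_subtype_val⟩
  let fs : ℕ → BoundedContinuousFunction (Icc a b) E := fun n =>
    BoundedContinuousFunction.mkOfCompact ((⟨γs n, (hγs n).continuous⟩ : C(ℝ, E)).comp ι)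
  have hlip : ∀ n, LipschitzWith K (fs n) := fun n => by
    simpa using! (hγs n).comp (LipschitzWith.subtype_val _)
  have hcompact : IsCompact (closure (range fs)) := by
    refine BoundedContinuousFunction.arzela_ascoli (Metric.closedBall z (K * (b - a)))
      (isCompact_closedBall _ _) _ ?_ ?_
    · rintro _ t ⟨n, rfl⟩
      rw [Metric.mem_closedBall, ← h0 n]
      refine ((hγs n).dist_le_mul t a).trans (mul_le_mul_of_nonneg_left ?_ K.coe_nonneg)
      rw [Real.dist_eq, abs_of_nonneg (sub_nonneg.2 t.2.1)]
      exact sub_le_sub_right t.2.2 a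
    · refine (LipschitzWith.uniformEquicontinuous _ K ?_).equicontinuous
      rintro ⟨_, n, rfl⟩
      exact hlip n
  obtain ⟨f, -, φ, hφ, hlim⟩ :=
    hcompact.tendsto_subseq fun n => subset_closure (mem_range_self (f := fs) n)
  have heval (t : Icc a b) : Tendsto (fun n => fs (φ n) t) atTop (𝓝 (f t)) :=
    ((continuous_eval_const t).tendsto f).comp hlim
  have hf : LipschitzWith K f := LipschitzWith.of_dist_le_mul fun s t =>
    le_of_tendsto' ((heval s).dist (heval t)) fun n => (hlip (φ n)).dist_le_mul s t
  refine ⟨fun t => f (projIcc a b hab t),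
    by simpa using! hf.comp (LipschitzWith.projIcc hab), φ, hφ, fun t ht => ?_⟩
  rw [uIcc_of_le hab] at ht
  simpa only [projIcc_of_mem hab ht] using! heval ⟨t, ht⟩

end Limits

section LowerSemicontinuity

variable {E : Type*} [NormedAddCommGroup E] [InnerProductSpace ℝ E] [FiniteDimensional ℝ E]
  {a b : ℝ} {γs : ℕ → ℝ → E} {γ ψ : ℝ → E} {K : NNReal} {G : E → ℝ}

theorem intervalIntegrable_inner_deriv (hγ : LipschitzWith K γ)
    (hψ : IntervalIntegrable ψ volume a b) :
    IntervalIntegrable (fun t => inner ℝ (ψ t) (deriv γ t)) volume a b := by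
  refine (hψ.norm.mul_const K).mono_fun'
    (hψ.aestronglyMeasurable_restrict_uIoc.inner
      (stronglyMeasurable_deriv γ).aestronglyMeasurable) (Eventually.of_forall fun t => ?_)
  exact (norm_inner_le_norm _ _).trans
    (mul_le_mul_of_nonneg_left (norm_deriv_le_of_lipschitz hγ) (norm_nonneg _))

theorem abs_integral_inner_deriv_sub_le {φ : ℝ → E} (hab : a ≤ b) (hγ : LipschitzWith K γ)
    (hψ : IntervalIntegrable ψ volume a b) (hφ : IntervalIntegrable φ volume a b) :
    |(∫ t in a..b, inner ℝ (ψ t) (deriv γ t)) - ∫ t in a..b, inner ℝ (φ t) (deriv γ t)| ≤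
      (∫ t in a..b, ‖ψ t - φ t‖) * K := by
  rw [← intervalIntegral.integral_sub (intervalIntegrable_inner_deriv hγ hψ)
    (intervalIntegrable_inner_deriv hγ hφ), ← intervalIntegral.integral_mul_const,
    ← Real.norm_eq_abs]
  refine intervalIntegral.norm_integral_le_of_norm_le hab (Eventually.of_forall fun t _ => ?_)
    ((hψ.sub hφ).norm.mul_const _)
  rw [← inner_sub_left]
  exact (norm_inner_le_norm _ _).trans
    (mul_le_mul_of_nonneg_left (norm_deriv_le_of_lipschitz hγ) (norm_nonneg _))

theorem tendsto_integral_inner_deriv (hab : a ≤ b) (hγs : ∀ n, LipschitzWith K (γs n))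
    (hγ : LipschitzWith K γ) (hlim : ∀ t ∈ uIcc a b, Tendsto (γs · t) atTop (𝓝 (γ t)))
    (hψ : IntervalIntegrable ψ volume a b) :
    Tendsto (fun n => ∫ t in a..b, inner ℝ (ψ t) (deriv (γs n) t)) atTop
      (𝓝 (∫ t in a..b, inner ℝ (ψ t) (deriv γ t))) := by
  rw [Metric.tendsto_nhds]
  intro ε hε
  obtain ⟨φ, C, hφ, hψφ⟩ := exists_lipschitz_integral_norm_sub_le hab hψ
    (show 0 < ε / (4 * (K + 1)) by positivity)
  have hφint : IntervalIntegrable φ volume a b := hφ.continuous.intervalIntegrable a b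
  have happrox : ∀ δ : ℝ → E, LipschitzWith K δ →
      |(∫ t in a..b, inner ℝ (ψ t) (deriv δ t)) - ∫ t in a..b, inner ℝ (φ t) (deriv δ t)| ≤
        ε / 4 := fun δ hδ =>
    calc _ ≤ (∫ t in a..b, ‖ψ t - φ t‖) * K := abs_integral_inner_deriv_sub_le hab hδ hψ hφint
      _ ≤ ε / (4 * (K + 1)) * (K + 1) := by gcongr; linarith
      _ = ε / 4 := by field_simp
  filter_upwards [Metric.tendsto_nhds.1
    (tendsto_integral_bilin_deriv (innerSL ℝ) hγs hγ hlim hφ) (ε / 4) (by positivity)] with n hn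
  change |(∫ t in a..b, inner ℝ (φ t) (deriv (γs n) t)) -
    ∫ t in a..b, inner ℝ (φ t) (deriv γ t)| < ε / 4 at hn
  have hn₁ := abs_le.1 (happrox (γs n) (hγs n))
  have hn₂ := abs_le.1 (happrox γ hγ)
  have hn₃ := abs_lt.1 hn
  exact abs_lt.2 ⟨by linarith, by linarith⟩

/-- Testing against `G(γ) γ'/‖γ'‖` linearizes the length in the velocity. -/
theorem eventually_lt_weightedLength (hab : a ≤ b) (hγs : ∀ n, LipschitzWith K (γs n))
    (hγ : LipschitzWith K γ) (hlim : ∀ t ∈ uIcc a b, Tendsto (γs · t) atTop (𝓝 (γ t)))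
    (hG : Continuous G) (hG0 : ∀ z, 0 ≤ G z) {c : ℝ} (hc : c < weightedLength G a b γ) :
    ∀ᶠ n in atTop, c < weightedLength G a b (γs n) := by
  set u : ℝ → E := fun t => ‖deriv γ t‖⁻¹ • deriv γ t
  have hu : ∀ t, ‖u t‖ ≤ 1 := fun t => by
    simpa [u, norm_smul] using inv_mul_le_one (a := ‖deriv γ t‖)
  have hψ : IntervalIntegrable (fun t => G (γ t) • u t) volume a b :=
    IntervalIntegrable.continuousOn_smul
      ((intervalIntegrable_const (c := (1 : ℝ))).mono_fun'
        ((stronglyMeasurable_deriv γ).norm.inv₀.smul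
          (stronglyMeasurable_deriv γ)).aestronglyMeasurable (Eventually.of_forall hu))
      (hG.comp hγ.continuous).continuousOn
  have hγlen : ∫ t in a..b, inner ℝ (G (γ t) • u t) (deriv γ t) = weightedLength G a b γ := by
    refine intervalIntegral.integral_congr fun t _ => ?_
    simp only [u, real_inner_smul_left, real_inner_self_eq_norm_sq]
    rcases eq_or_ne ‖deriv γ t‖ 0 with h0 | h0
    · simp [h0]
    · field_simp
  have hGL := continuous_weightedLength_integrand hG
  have hsum := (tendsto_action_sub_frozen hGL hγs hγ.continuous hlim).add
    (tendsto_integral_inner_deriv hab hγs hγ hlim hψ)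
  rw [zero_add, hγlen] at hsum
  filter_upwards [hsum.eventually_const_lt hc] with n hn
  have hintegrable := intervalIntegrable_action hGL (hγs n) a b
  have hintegrable' := intervalIntegrable_comp_deriv hGL hγ.continuous (hγs n) a b
  have hψle : ∫ t in a..b, inner ℝ (G (γ t) • u t) (deriv (γs n) t) ≤
      ∫ t in a..b, G (γ t) * ‖deriv (γs n) t‖ :=
    intervalIntegral.integral_mono_on hab (intervalIntegrable_inner_deriv (hγs n) hψ) hintegrable'
      fun t _ => by
        rw [real_inner_smul_left]
        exact mul_le_mul_of_nonneg_left ((real_inner_le_norm _ _).trans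
          (mul_le_of_le_one_left (norm_nonneg _) (hu t))) (hG0 _)
  rw [intervalIntegral.integral_sub hintegrable hintegrable'] at hn
  unfold weightedLength action
  linarith

end LowerSemicontinuity

/-! ### The area-penalized length -/

section

variable {E : Type*} [NormedAddCommGroup E]

section PenalizedLength

variable [NormedSpace ℝ E]

/-- The length weighted by `G` plus `κ` times the deviation of the area `∫ B(γ, γ')` from `A`: the
functional in which the area constraint is relaxed to a penalty. -/
def penalized (G : E → ℝ) (B : E →L[ℝ] E →L[ℝ] ℝ) (κ A a b : ℝ) (γ : ℝ → E) : ℝ :=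
  weightedLength G a b γ + κ * |bilinArea B a b γ - A|

/-- `γ` on `[a, b]` minimizes the penalized length among all Lipschitz curves from `p` to `q`, over
all parameter intervals. -/
structure IsPenalizedMin (G : E → ℝ) (B : E →L[ℝ] E →L[ℝ] ℝ) (κ A : ℝ) (p q : E) (a b : ℝ)
    (γ : ℝ → E) : Prop where
  curve : LipCurve a b γ p q
  le : ∀ {c d : ℝ} {δ : ℝ → E}, LipCurve c d δ p q →
    penalized G B κ A a b γ ≤ penalized G B κ A c d δ

theorem penalized_nonneg {G : E → ℝ} {B : E →L[ℝ] E →L[ℝ] ℝ} {κ A a b : ℝ}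
    (hG0 : ∀ z, 0 ≤ G z) (hκ : 0 ≤ κ) (hab : a ≤ b) (γ : ℝ → E) :
    0 ≤ penalized G B κ A a b γ :=
  add_nonneg (weightedLength_nonneg hG0 hab γ) (mul_nonneg hκ (abs_nonneg _))

end PenalizedLength

variable [InnerProductSpace ℝ E] [FiniteDimensional ℝ E] {G : E → ℝ} {B : E →L[ℝ] E →L[ℝ] ℝ}
  {κ A : ℝ} {p q : E}

theorem exists_isPenalizedMin_of_minimizing (hG : Continuous G) (hG0 : ∀ z, 0 ≤ G z)
    {as bs : ℕ → ℝ} {γs : ℕ → ℝ → E} (hγs : ∀ n, LipCurve (as n) (bs n) (γs n) p q)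
    {L : ℝ} (hlen : ∀ n, curveLength (as n) (bs n) (γs n) ≤ L)
    (hmin : ∀ c d δ, LipCurve c d δ p q → ∀ ε > 0, ∀ᶠ n in atTop,
      penalized G B κ A (as n) (bs n) (γs n) ≤ penalized G B κ A c d δ + ε) :
    ∃ γ, IsPenalizedMin G B κ A p q 0 1 γ := by
  choose δs hδlip hδcurve hδaction using fun n => (hγs n).exists_reparam
  have hlip n : LipschitzWith (L + 1).toNNReal (δs n) :=
    (hδlip n).weaken (Real.toNNReal_mono (add_le_add_left (hlen n) 1))
  have hpen n : penalized G B κ A 0 1 (δs n) = penalized G B κ A (as n) (bs n) (γs n) := by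
    have hlength := hδaction n (fun z v => G z * ‖v‖) fun z v c hc => by
      rw [norm_smul, Real.norm_of_nonneg hc, mul_left_comm]
    have harea := hδaction n (fun z v => B z v) fun z v c _ => by simp
    simp only [penalized, weightedLength, bilinArea, hlength, harea]
  obtain ⟨γ, hγ, φ, hφ, hlim⟩ :=
    exists_subseq_tendsto_of_lipschitz hlip (fun n => (hδcurve n).left) zero_le_one
  have hleft : γ 0 = p := tendsto_nhds_unique (hlim 0 left_mem_uIcc)
    (by simp only [(hδcurve _).left, tendsto_const_nhds])
  have hright : γ 1 = q := tendsto_nhds_unique (hlim 1 right_mem_uIcc)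
    (by simp only [(hδcurve _).right, tendsto_const_nhds])
  refine ⟨γ, ⟨⟨zero_le_one, ⟨_, hγ⟩, hleft, hright⟩, fun {c d δ} hδ => ?_⟩⟩
  refine le_of_forall_pos_lt_add fun ε hε => ?_
  have hpenalty := (((tendsto_bilinArea B (fun n => hlip (φ n)) hγ hlim).sub_const A).abs.const_mul
    κ).eventually_const_lt (sub_lt_self _ (show 0 < ε / 3 by positivity))
  have hlength := eventually_lt_weightedLength zero_le_one (fun n => hlip (φ n)) hγ hlim hG hG0
    (sub_lt_self _ (show 0 < ε / 3 by positivity))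
  obtain ⟨n, h₁, h₂, h₃⟩ := (hpenalty.and (hlength.and
    (hφ.tendsto_atTop.eventually (hmin c d δ hδ (ε / 3) (by positivity))))).exists
  rw [← hpen] at h₃
  simp only [penalized] at h₃ ⊢
  linarith

theorem exists_isPenalizedMin_of_forall_le (hG : Continuous G) {η : ℝ} (hη : 0 < η)
    (hGη : ∀ z, η ≤ G z) (hκ : 0 ≤ κ) : ∃ γ, IsPenalizedMin G B κ A p q 0 1 γ := by
  have hG0 z : 0 ≤ G z := hη.le.trans (hGη z)
  let S : Set ℝ := {J | ∃ a b γ, LipCurve a b γ p q ∧ penalized G B κ A a b γ = J}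
  have hne : S.Nonempty := ⟨_, 0, 1, _, lipCurve_lineMap p q, rfl⟩
  have hbdd : BddBelow S := by
    refine ⟨0, ?_⟩
    rintro _ ⟨a, b, γ, hγ, rfl⟩
    exact penalized_nonneg hG0 hκ hγ.le γ
  obtain ⟨Js, -, hlim, hJs⟩ := exists_seq_tendsto_sInf hne hbdd
  choose as bs γs hγs hpen using hJs
  obtain ⟨M, hM⟩ := hlim.bddAbove_range
  refine exists_isPenalizedMin_of_minimizing hG hG0 hγs (L := M / η) (fun n => ?_)
    fun c d δ hδ ε hε => ?_
  · obtain ⟨K, hK⟩ := (hγs n).lipschitz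
    rw [le_div_iff₀' hη]
    calc η * curveLength (as n) (bs n) (γs n)
        ≤ weightedLength G (as n) (bs n) (γs n) :=
          mul_curveLength_le_weightedLength hG hK (hγs n).le fun t _ => hGη _
      _ ≤ penalized G B κ A (as n) (bs n) (γs n) :=
          le_add_of_nonneg_right (mul_nonneg hκ (abs_nonneg _))
      _ ≤ M := hpen n ▸ hM ⟨n, rfl⟩
  · filter_upwards [hlim.eventually_lt_const (lt_add_of_pos_right _ hε)] with n hn
    rw [hpen n]
    exact hn.le.trans (add_le_add_left (csInf_le hbdd ⟨c, d, δ, hδ, rfl⟩) ε)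

end

/-! ### Length control -/

section

variable {u v : ℝ} {g ℓ : ℝ → ℝ}

theorem exists_first_time_eq {f : ℝ → ℝ} (hf : Continuous f) {c : ℝ} (huv : u ≤ v)
    (hu : f u ≤ c) (hv : c ≤ f v) : ∃ t ∈ Icc u v, f t = c ∧ ∀ s ∈ Icc u t, f s ≤ c := by
  obtain ⟨t, ⟨ht, hft⟩, hleast⟩ :=
    (isCompact_Icc.inter_right (isClosed_singleton.preimage hf)).exists_isLeast
      (intermediate_value_Icc huv hf.continuousOn ⟨hu, hv⟩)
  refine ⟨t, ht, hft, fun s hs => le_of_not_gt fun hcs => ?_⟩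
  obtain ⟨r, hr, hfr⟩ := intermediate_value_Icc hs.1 hf.continuousOn ⟨hu, hcs.le⟩
  have htr : t ≤ r := hleast ⟨⟨hr.1, hr.2.trans (hs.2.trans ht.2)⟩, hfr⟩
  rw [hr.2.antisymm (hs.2.trans htr)] at hfr
  exact hcs.ne' hfr

theorem monotoneOn_primitive (hg : IntervalIntegrable g volume u v) (hg0 : ∀ t, 0 ≤ g t)
    (huv : u ≤ v) : MonotoneOn (fun t => ∫ τ in u..t, g τ) (Icc u v) := by
  intro s hs t ht hst
  refine intervalIntegral.integral_mono_interval le_rfl hs.1 hst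
    (Eventually.of_forall hg0) (hg.mono_set ?_)
  rw [uIcc_of_le ht.1, uIcc_of_le huv]
  exact Icc_subset_Icc_right ht.2

/-- The integrand is twice the derivative of the square root. -/
theorem integral_div_sqrt_primitive_le (hg : IntervalIntegrable g volume u v)
    (hg0 : ∀ t, 0 ≤ g t) (huv : u ≤ v) {ε : ℝ} (hε : 0 < ε) :
    ∫ t in u..v, g t / √((∫ τ in u..t, g τ) + ε) ≤ 2 * √(∫ t in u..v, g t) := by
  set h : ℝ → ℝ := fun t => √((∫ τ in u..t, g τ) + ε)
  have hmono : MonotoneOn h (uIcc u v) := by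
    rw [uIcc_of_le huv]
    exact fun s hs t ht hst =>
      Real.sqrt_le_sqrt (add_le_add_left (monotoneOn_primitive hg hg0 huv hs ht hst) ε)
  have hderiv : ∀ᵐ t, t ∈ uIoc u v → g t / h t = 2 * deriv h t := by
    filter_upwards [hg.ae_hasDerivAt_integral] with t ht htuv
    have hpos : 0 < (∫ τ in u..t, g τ) + ε := add_pos_of_nonneg_of_pos
      (intervalIntegral.integral_nonneg ((uIoc_of_le huv).subset htuv).1.le fun _ _ => hg0 _) hε
    rw [(((ht (uIoc_subset_uIcc htuv) u left_mem_uIcc).add_const ε).sqrt hpos.ne').deriv]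
    change g t / √((∫ τ in u..t, g τ) + ε) = _
    field_simp
  have hle : ∫ t in u..v, deriv h t ≤ h v - h u := by
    have hmem := hmono.intervalIntegral_deriv_mem_uIcc
    rw [uIcc_of_le (sub_nonneg.2 (hmono left_mem_uIcc right_mem_uIcc huv))] at hmem
    exact hmem.2
  have hsubadd : h v ≤ √(∫ t in u..v, g t) + h u := by
    have hintegrable : 0 ≤ ∫ t in u..v, g t := intervalIntegral.integral_nonneg huv fun _ _ => hg0 _
    rw [show h u = √ε by simp [h]]
    refine Real.sqrt_le_iff.2 ⟨by positivity, ?_⟩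
    nlinarith [Real.sq_sqrt hintegrable, Real.sq_sqrt hε.le, Real.sqrt_nonneg ε,
      Real.sqrt_nonneg (∫ t in u..v, g t)]
  rw [intervalIntegral.integral_congr_ae hderiv, intervalIntegral.integral_const_mul]
  linarith

theorem integral_le_mul_sqrt_of_mul_sqrt_primitive_le (hg : IntervalIntegrable g volume u v)
    (hg0 : ∀ t, 0 ≤ g t) (hℓ : IntervalIntegrable ℓ volume u v) (huv : u ≤ v) {ε C : ℝ}
    (hε : 0 < ε) (hC : 0 ≤ C)
    (h : ∀ t ∈ Icc u v, ℓ t * √((∫ τ in u..t, g τ) + ε) ≤ C * g t) :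
    ∫ t in u..v, ℓ t ≤ 2 * C * √(∫ t in u..v, g t) := by
  have hpos : ∀ t ∈ Icc u v, 0 < (∫ τ in u..t, g τ) + ε := fun t ht =>
    add_pos_of_nonneg_of_pos (intervalIntegral.integral_nonneg ht.1 fun _ _ => hg0 _) hε
  have hcont : ContinuousOn (fun t => (√((∫ τ in u..t, g τ) + ε))⁻¹) (uIcc u v) := by
    refine ContinuousOn.inv₀ (((intervalIntegral.continuousOn_primitive_interval'
      hg left_mem_uIcc).add continuousOn_const).sqrt) fun t ht => ?_
    exact (Real.sqrt_pos.2 (hpos t (by rwa [uIcc_of_le huv] at ht))).ne'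
  calc ∫ t in u..v, ℓ t ≤ ∫ t in u..v, C * (g t / √((∫ τ in u..t, g τ) + ε)) := by
        refine intervalIntegral.integral_mono_on huv hℓ
          ((hg.mul_continuousOn hcont).const_mul C) fun t ht => ?_
        rw [← mul_div_assoc, le_div_iff₀ (Real.sqrt_pos.2 (hpos t ht))]
        exact h t ht
    _ ≤ C * (2 * √(∫ t in u..v, g t)) := by
        rw [intervalIntegral.integral_const_mul]
        exact mul_le_mul_of_nonneg_left (integral_div_sqrt_primitive_le hg hg0 huv hε) hC
    _ = 2 * C * √(∫ t in u..v, g t) := by ring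

theorem le_mul_of_descent {X : Type*} {ℓ e : X → ℝ} {Λ c : ℝ} (hc : 0 < c) (hΛ : 0 ≤ Λ)
    (he : ∀ x, 0 ≤ e x) (hstep : ∀ x, ℓ x ≤ Λ ∨ ∃ y, ℓ x ≤ Λ + ℓ y ∧ c + e y ≤ e x) {n : ℕ} :
    ∀ x, e x ≤ n * c → ℓ x ≤ (n + 1) * Λ := by
  induction n with
  | zero =>
    intro x hx
    rcases hstep x with hdone | ⟨y, -, hdrop⟩
    · simpa using hdone
    · rw [Nat.cast_zero, zero_mul] at hx
      linarith [he y]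
  | succ n ih =>
    intro x hx
    push_cast at hx ⊢
    rcases hstep x with hdone | ⟨y, hlen, hdrop⟩
    · nlinarith [mul_nonneg n.cast_nonneg hΛ]
    · linarith [ih y (by linarith)]

end

section

variable {E : Type*} [NormedAddCommGroup E] [NormedSpace ℝ E] [FiniteDimensional ℝ E]
  {u v : ℝ} {γ : ℝ → E} {K : NNReal} {G : E → ℝ} {r : ℝ → ℝ} {η N D : ℝ}

theorem weightedLength_mono_interval (hG : Continuous G) (hG0 : ∀ z, 0 ≤ G z)
    (hγ : LipschitzWith K γ) {a b : ℝ} (hau : a ≤ u) (huv : u ≤ v) (hvb : v ≤ b) :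
    weightedLength G u v γ ≤ weightedLength G a b γ :=
  intervalIntegral.integral_mono_interval hau huv hvb
    (Eventually.of_forall fun _ => mul_nonneg (hG0 _) (norm_nonneg _))
    (intervalIntegrable_action (continuous_weightedLength_integrand hG) hγ a b)

theorem curveLength_le_of_weightedLength_le_sq (hG : Continuous G) (hG0 : ∀ z, 0 ≤ G z)
    (hγ : LipschitzWith K γ) (huv : u ≤ v) (hη : 0 < η) (hN : 0 ≤ N) (hD : 0 ≤ D)
    (hr : ∀ t ∈ Icc u v, η ≤ r t) (hrG : ∀ t ∈ Icc u v, r t ≤ N * G (γ t))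
    (hgrow : ∀ t ∈ Icc u v, weightedLength G u t γ ≤ D * r t ^ 2) :
    curveLength u v γ ≤ 2 * (√(D + 1) * N) * √(weightedLength G u v γ) := by
  refine integral_le_mul_sqrt_of_mul_sqrt_primitive_le
    (intervalIntegrable_action (continuous_weightedLength_integrand hG) hγ u v)
    (fun t => mul_nonneg (hG0 _) (norm_nonneg _))
    (intervalIntegrable_action continuous_curveLength_integrand hγ u v) huv
    (pow_pos hη 2) (by positivity) fun t ht => ?_
  have hsqrt : √(weightedLength G u t γ + η ^ 2) ≤ √(D + 1) * r t := by
    rw [← Real.sqrt_sq (hη.le.trans (hr t ht)), ← Real.sqrt_mul (by positivity)]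
    refine Real.sqrt_le_sqrt ?_
    linarith [hgrow t ht, pow_le_pow_left₀ hη.le (hr t ht) 2]
  calc ‖deriv γ t‖ * √(weightedLength G u t γ + η ^ 2)
      ≤ ‖deriv γ t‖ * (√(D + 1) * (N * G (γ t))) := by
        gcongr
        exact hsqrt.trans (mul_le_mul_of_nonneg_left (hrG t ht) (Real.sqrt_nonneg _))
    _ = √(D + 1) * N * (G (γ t) * ‖deriv γ t‖) := by ring

theorem curveLength_le_of_weightedLength_le_sq_right (hG : Continuous G) (hG0 : ∀ z, 0 ≤ G z)
    (hγ : LipschitzWith K γ) (huv : u ≤ v) (hη : 0 < η) (hN : 0 ≤ N) (hD : 0 ≤ D)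
    (hr : ∀ t ∈ Icc u v, η ≤ r t) (hrG : ∀ t ∈ Icc u v, r t ≤ N * G (γ t))
    (hgrow : ∀ t ∈ Icc u v, weightedLength G t v γ ≤ D * r t ^ 2) :
    curveLength u v γ ≤ 2 * (√(D + 1) * N) * √(weightedLength G u v γ) := by
  have hneg : ∀ t ∈ Icc (-v) (-u), -t ∈ Icc u v := fun t ht => ⟨le_neg.2 ht.2, neg_le.1 ht.1⟩
  have hreflect (s t : ℝ) :
      weightedLength G s t (fun τ => γ (-τ)) = weightedLength G (-t) (-s) γ :=
    action_comp_neg (fun z v => by rw [norm_neg]) s t γ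
  have hreflect' : curveLength (-v) (-u) (fun τ => γ (-τ)) = curveLength u v γ := by
    rw [curveLength, action_comp_neg (fun _ v => norm_neg v), neg_neg, neg_neg]
  have hlip : LipschitzWith (K * 1) fun τ => γ (-τ) := hγ.comp LipschitzWith.id.neg
  have hlen := curveLength_le_of_weightedLength_le_sq (r := fun t => r (-t)) hG hG0 hlip
    (neg_le_neg huv) hη hN hD (fun t ht => hr _ (hneg t ht)) (fun t ht => hrG _ (hneg t ht))
    fun t ht => by
      rw [hreflect, neg_neg]
      exact hgrow _ (hneg t ht)
  rwa [hreflect, hreflect', neg_neg, neg_neg] at hlen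

/-- Split the curve at the time where `r` is smallest. -/
theorem curveLength_le_of_weightedLength_le_sq_add_sq (hG : Continuous G) (hG0 : ∀ z, 0 ≤ G z)
    (hγ : LipschitzWith K γ) (huv : u ≤ v) (hη : 0 < η) (hN : 0 ≤ N) (hD : 0 ≤ D)
    (hrcont : Continuous r) (hr : ∀ t ∈ Icc u v, η ≤ r t)
    (hrG : ∀ t ∈ Icc u v, r t ≤ N * G (γ t))
    (hgrow : ∀ s ∈ Icc u v, ∀ t ∈ Icc s v, weightedLength G s t γ ≤ D * (r s ^ 2 + r t ^ 2)) :
    curveLength u v γ ≤ 4 * (√(2 * D + 1) * N) * √(weightedLength G u v γ) := by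
  obtain ⟨t₀, ht₀, hmin⟩ :=
    isCompact_Icc.exists_isMinOn (nonempty_Icc.2 huv) hrcont.continuousOn
  have hsq : ∀ t ∈ Icc u v, r t₀ ^ 2 ≤ r t ^ 2 := fun t ht =>
    pow_le_pow_left₀ (hη.le.trans (hr t₀ ht₀)) (hmin ht) 2
  have hleft : Icc u t₀ ⊆ Icc u v := Icc_subset_Icc_right ht₀.2
  have hright : Icc t₀ v ⊆ Icc u v := Icc_subset_Icc_left ht₀.1
  have hlenR := curveLength_le_of_weightedLength_le_sq hG hG0 hγ ht₀.2 hη hN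
    (mul_nonneg zero_le_two hD) (fun t ht => hr t (hright ht)) (fun t ht => hrG t (hright ht))
    fun t ht => (hgrow t₀ ht₀ t ht).trans (by nlinarith [hsq t (hright ht)])
  have hlenL := curveLength_le_of_weightedLength_le_sq_right hG hG0 hγ ht₀.1 hη hN
    (mul_nonneg zero_le_two hD) (fun t ht => hr t (hleft ht)) (fun t ht => hrG t (hleft ht))
    fun t ht => (hgrow t (hleft ht) t₀ ⟨ht.2, ht₀.2⟩).trans (by nlinarith [hsq t (hleft ht)])
  have hC : 0 ≤ 2 * (√(2 * D + 1) * N) := by positivity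
  have hR := Real.sqrt_le_sqrt (weightedLength_mono_interval hG hG0 hγ ht₀.1 ht₀.2 le_rfl)
  have hL := Real.sqrt_le_sqrt (weightedLength_mono_interval hG hG0 hγ le_rfl ht₀.1 ht₀.2)
  rw [curveLength, ← action_add_adjacent continuous_curveLength_integrand hγ u t₀ v]
  linarith [hlenL.trans (mul_le_mul_of_nonneg_left hL hC),
    hlenR.trans (mul_le_mul_of_nonneg_left hR hC)]

end

/-! ### Minimizers of the penalized length -/

section Replacement

variable {E : Type*} [NormedAddCommGroup E] [NormedSpace ℝ E] [FiniteDimensional ℝ E]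
  {G : E → ℝ} {B : E →L[ℝ] E →L[ℝ] ℝ} {κ A : ℝ} {p q : E} {a b u v : ℝ} {γ : ℝ → E}

theorem IsPenalizedMin.weightedLength_le_of_replace (h : IsPenalizedMin G B κ A p q a b γ)
    (hG : Continuous G) (hκ : 0 ≤ κ) (hau : a ≤ u) (hvb : v ≤ b) {c d : ℝ} {δ : ℝ → E}
    (hδ : LipCurve c d δ (γ u) (γ v)) :
    weightedLength G u v γ ≤
      weightedLength G c d δ + κ * |bilinArea B c d δ - bilinArea B u v γ| := by
  obtain ⟨K, hK⟩ := h.curve.lipschitz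
  obtain ⟨e₁, ε₁, hε₁, haction₁⟩ := (h.curve.restrict hau).exists_concat hδ
  obtain ⟨e₂, ε₂, hε₂, haction₂⟩ := hε₁.exists_concat (h.curve.restrict hvb)
  rw [h.curve.left, h.curve.right] at hε₂
  have hGL := continuous_weightedLength_integrand hG
  have hBL := continuous_bilinArea_integrand B
  have hle := h.le hε₂
  simp only [penalized, weightedLength, bilinArea, haction₂ _ hGL, haction₁ _ hGL, haction₂ _ hBL,
    haction₁ _ hBL] at hle ⊢
  rw [← action_add_adjacent hGL hK a u b, ← action_add_adjacent hGL hK u v b,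
    ← action_add_adjacent hBL hK a u b, ← action_add_adjacent hBL hK u v b] at hle
  have htri := mul_le_mul_of_nonneg_left (abs_sub_abs_le_abs_sub
    (action (fun z w => B z w) a u γ + action (fun z w => B z w) c d δ +
      action (fun z w => B z w) v b γ - A)
    (action (fun z w => B z w) a u γ + (action (fun z w => B z w) u v γ +
      action (fun z w => B z w) v b γ) - A)) hκ
  rw [mul_sub, show ∀ x y y' w : ℝ, x + y + w - A - (x + (y' + w) - A) = y - y' by intros; ring]
    at htri
  linarith

theorem IsPenalizedMin.weightedLength_le_of_detour (h : IsPenalizedMin G B κ A p q a b γ)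
    (hG : Continuous G) (hκ : 0 ≤ κ) (hau : a ≤ u) (hvb : v ≤ b) (z : E) :
    weightedLength G u v γ ≤ weightedLength G 0 1 (AffineMap.lineMap (γ u) z : ℝ → E) +
      weightedLength G 0 1 (AffineMap.lineMap z (γ v) : ℝ → E) + κ * |sweptArea B z u v γ| := by
  obtain ⟨K, hK⟩ := h.curve.lipschitz
  obtain ⟨e, ε, hε, haction⟩ := (lipCurve_lineMap (γ u) z).exists_concat (lipCurve_lineMap z (γ v))
  have hlen := haction _ (continuous_weightedLength_integrand hG)
  have hin : sweptArea B z 0 1 (AffineMap.lineMap (γ u) z : ℝ → E) = 0 := by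
    rw [sweptArea_lineMap, ← neg_sub z (γ u)]
    simp only [map_neg, neg_apply, sub_self, mul_zero]
  have hout : sweptArea B z 0 1 (AffineMap.lineMap z (γ v) : ℝ → E) = 0 := by
    simp [sweptArea_lineMap]
  have harea : bilinArea B 0 e ε - bilinArea B u v γ = -sweptArea B z u v γ := by
    obtain ⟨K', hK'⟩ := hε.lipschitz
    have hswept := haction _ (continuous_sweptArea_integrand B z)
    rw [bilinArea_eq_sweptArea_add B z hK', bilinArea_eq_sweptArea_add B z hK, hε.left, hε.right]
    simp only [sweptArea] at hin hout ⊢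
    linarith
  have hle := h.weightedLength_le_of_replace hG hκ hau hvb hε
  rw [harea, abs_neg] at hle
  simp only [weightedLength] at hlen hle ⊢
  linarith

end Replacement

section Wells

variable {E : Type*} [NormedAddCommGroup E]

/-- A continuous weight whose zeros form the compact set `P` of wells: within distance `s` of each
well it lies between the cones of slopes `m` and `C`, and it is at least `c` at distance `s / 2`
from all wells. -/
structure LinearWells (F : E → ℝ) (P : Set E) (m C s c : ℝ) : Prop where
  continuous : Continuous F
  isCompact : IsCompact P
  slope_pos : 0 < m
  slope_nonneg : 0 ≤ C
  radius_pos : 0 < s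
  level_pos : 0 < c
  lower : ∀ p ∈ P, ∀ z, ‖z - p‖ ≤ s → m * ‖z - p‖ ≤ F z
  upper : ∀ p ∈ P, ∀ z, ‖z - p‖ ≤ s → F z ≤ C * ‖z - p‖
  away : ∀ z, (∀ p ∈ P, s / 2 ≤ ‖z - p‖) → c ≤ F z

namespace LinearWells

variable {F : E → ℝ} {P : Set E} {m C s c : ℝ}

theorem nonneg (h : LinearWells F P m C s c) (z : E) : 0 ≤ F z := by
  by_cases hz : ∀ p ∈ P, s / 2 ≤ ‖z - p‖
  · exact h.level_pos.le.trans (h.away z hz)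
  · push Not at hz
    obtain ⟨p, hp, hzp⟩ := hz
    exact (mul_nonneg h.slope_pos.le (norm_nonneg _)).trans
      (h.lower p hp z (hzp.le.trans (half_le_self h.radius_pos.le)))

variable [NormedSpace ℝ E] {B : E →L[ℝ] E →L[ℝ] ℝ} {κ A η a b u v : ℝ} {p p₀ q : E} {γ : ℝ → E}
  {K : NNReal}

theorem weightedLength_lineMap_le (h : LinearWells F P m C s c) (hp : p ∈ P) (hη : 0 ≤ η) {z w : E}
    (hzw : ∀ t ∈ Icc (0 : ℝ) 1, ‖AffineMap.lineMap z w t - p‖ ≤ ‖w - z‖) (hs : ‖w - z‖ ≤ s) :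
    weightedLength (fun z => F z + η) 0 1 (AffineMap.lineMap z w : ℝ → E) ≤
      (C + 1) * (‖w - z‖ + η) ^ 2 := by
  have hC := h.slope_nonneg
  calc _ ≤ (C * ‖w - z‖ + η) * ‖w - z‖ := by
        refine _root_.weightedLength_lineMap_le (h.continuous.add continuous_const)
          fun t ht => ?_
        exact add_le_add_left ((h.upper p hp _ ((hzw t ht).trans hs)).trans
          (mul_le_mul_of_nonneg_left (hzw t ht) hC)) η
    _ ≤ (C + 1) * (‖w - z‖ + η) ^ 2 := by
        have := norm_nonneg (w - z)
        have := mul_nonneg hη (norm_nonneg (w - z))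
        nlinarith [mul_nonneg hC this, mul_nonneg hC (sq_nonneg η), sq_nonneg ‖w - z‖]

variable [FiniteDimensional ℝ E]

theorem abs_sweptArea_le (h : LinearWells F P m C s c) (hB : ∀ u v, |B u v - B v u| ≤ ‖u‖ * ‖v‖)
    (hp : p ∈ P) (hγ : LipschitzWith K γ) (huv : u ≤ v) (hin : ∀ t ∈ Icc u v, ‖γ t - p‖ ≤ s) :
    |sweptArea B p u v γ| ≤ weightedLength F u v γ / (2 * m) := by
  have hm := h.slope_pos
  rw [le_div_iff₀' (by positivity)]
  calc 2 * m * |sweptArea B p u v γ|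
      ≤ 2 * m * (1 / 2 * weightedLength (fun z => ‖z - p‖) u v γ) := by
        gcongr
        exact _root_.abs_sweptArea_le hB p hγ huv
    _ = action (fun z w => m * (‖z - p‖ * ‖w‖)) u v γ := by
        simp only [weightedLength, action, intervalIntegral.integral_const_mul]
        ring
    _ ≤ weightedLength F u v γ := by
        refine action_mono (by fun_prop) (continuous_weightedLength_integrand h.continuous) hγ huv
          fun t ht w => ?_
        rw [← mul_assoc]
        exact mul_le_mul_of_nonneg_right (h.lower p hp _ (hin t ht)) (norm_nonneg w)

/-- The detour along the two radii to the well is quadratically cheap, and the area it loses costs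
only the fraction `κ / (2m)` of the length. -/
theorem weightedLength_le_of_isPenalizedMin (h : LinearWells F P m C s c)
    (hB : ∀ u v, |B u v - B v u| ≤ ‖u‖ * ‖v‖) (hκ : 0 ≤ κ) (hκm : κ < 2 * m) (hη : 0 ≤ η)
    (hmin : IsPenalizedMin (fun z => F z + η) B κ A p₀ q a b γ) (hp : p ∈ P) (hau : a ≤ u)
    (huv : u ≤ v) (hvb : v ≤ b) (hin : ∀ t ∈ Icc u v, ‖γ t - p‖ ≤ s) :
    weightedLength (fun z => F z + η) u v γ ≤
      (C + 1) / (1 - κ / (2 * m)) * ((‖γ u - p‖ + η) ^ 2 + (‖γ v - p‖ + η) ^ 2) := by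
  obtain ⟨K, hK⟩ := hmin.curve.lipschitz
  have hm := h.slope_pos
  have hθ : 0 < 1 - κ / (2 * m) := sub_pos.2 ((div_lt_one (by positivity)).2 hκm)
  have hdetour := hmin.weightedLength_le_of_detour (h.continuous.add continuous_const) hκ hau hvb p
  have hto := h.weightedLength_lineMap_le hp hη (z := γ u) (w := p)
    (fun t ht => by
      rw [AffineMap.lineMap_apply_module', show t • (p - γ u) + γ u - p = (1 - t) • (γ u - p) by
        module, norm_smul, Real.norm_of_nonneg (sub_nonneg.2 ht.2), norm_sub_rev p]
      exact mul_le_of_le_one_left (norm_nonneg _) (sub_le_self 1 ht.1))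
    (norm_sub_rev p (γ u) ▸ hin u (left_mem_Icc.2 huv))
  have hfrom := h.weightedLength_lineMap_le hp hη (z := p) (w := γ v)
    (fun t ht => by
      rw [AffineMap.lineMap_apply_module', add_sub_cancel_right, norm_smul,
        Real.norm_of_nonneg ht.1]
      exact mul_le_of_le_one_left (norm_nonneg _) ht.2)
    (hin v (right_mem_Icc.2 huv))
  have harea : κ * |sweptArea B p u v γ| ≤
      κ / (2 * m) * weightedLength (fun z => F z + η) u v γ := by
    rw [weightedLength_add_const h.continuous hK, div_mul_eq_mul_div, mul_div_assoc]
    refine mul_le_mul_of_nonneg_left ((h.abs_sweptArea_le hB hp hK huv hin).trans ?_) hκ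
    gcongr
    exact le_add_of_nonneg_right (mul_nonneg hη (curveLength_nonneg huv γ))
  rw [norm_sub_rev p] at hto
  rw [div_mul_eq_mul_div, le_div_iff₀ hθ]
  linarith

theorem curveLength_le_of_isPenalizedMin (h : LinearWells F P m C s c)
    (hB : ∀ u v, |B u v - B v u| ≤ ‖u‖ * ‖v‖) (hκ : 0 ≤ κ) (hκm : κ < 2 * m) (hη : 0 < η)
    (hmin : IsPenalizedMin (fun z => F z + η) B κ A p₀ q a b γ) (hp : p ∈ P) (hau : a ≤ u)
    (huv : u ≤ v) (hvb : v ≤ b) (hin : ∀ t ∈ Icc u v, ‖γ t - p‖ ≤ s) :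
    curveLength u v γ ≤ 4 * (√(2 * ((C + 1) / (1 - κ / (2 * m))) + 1) * (1 / m + 1)) *
      √(weightedLength (fun z => F z + η) a b γ) := by
  obtain ⟨K, hK⟩ := hmin.curve.lipschitz
  have hm := h.slope_pos
  have hC := h.slope_nonneg
  have hθ : 0 < 1 - κ / (2 * m) := sub_pos.2 ((div_lt_one (by positivity)).2 hκm)
  have hG : Continuous fun z => F z + η := h.continuous.add continuous_const
  have hG0 z : 0 ≤ F z + η := add_nonneg (h.nonneg z) hη.le
  have hlen := curveLength_le_of_weightedLength_le_sq_add_sq (r := fun t => ‖γ t - p‖ + η)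
    (N := 1 / m + 1) (D := (C + 1) / (1 - κ / (2 * m))) hG hG0 hK huv hη
    (by positivity) (by positivity) ((hK.continuous.sub continuous_const).norm.add continuous_const)
    (fun t _ => le_add_of_nonneg_left (norm_nonneg _))
    (fun t ht => by
      have hlow := (le_div_iff₀' hm).2 (h.lower p hp _ (hin t ht))
      have hF := h.nonneg (γ t)
      calc ‖γ t - p‖ + η ≤ F (γ t) / m + η := by gcongr
        _ ≤ F (γ t) / m + η + (F (γ t) + η / m) := le_add_of_nonneg_right (by positivity)
        _ = (1 / m + 1) * (F (γ t) + η) := by ring)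
    fun t₁ ht₁ t₂ ht₂ => h.weightedLength_le_of_isPenalizedMin hB hκ hκm hη.le hmin hp
      (hau.trans ht₁.1) ht₂.1 (ht₂.2.trans hvb)
      fun t ht => hin t ⟨ht₁.1.trans ht.1, ht.2.trans ht₂.2⟩
  exact hlen.trans (mul_le_mul_of_nonneg_left
    (Real.sqrt_le_sqrt (weightedLength_mono_interval hG hG0 hK hau huv hvb)) (by positivity))

end LinearWells

end Wells

theorem mul_norm_sq_sub_le_weightedLength {E : Type*} [NormedAddCommGroup E]
    [InnerProductSpace ℝ E] [FiniteDimensional ℝ E] {G : E → ℝ} (hG : Continuous G) {K : NNReal}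
    {γ : ℝ → E} (hγ : LipschitzWith K γ) {u v m : ℝ} (huv : u ≤ v) (hm : 0 ≤ m) {p : E}
    (hlow : ∀ t ∈ Icc u v, m * ‖γ t - p‖ ≤ G (γ t)) :
    m * ((‖γ v - p‖ ^ 2 - ‖γ u - p‖ ^ 2) / 2) ≤ weightedLength G u v γ := by
  have hγp : LipschitzWith (K + 0) fun t => γ t - p := hγ.sub (LipschitzWith.const p)
  have hparts : ∫ t in u..v, 2 * inner ℝ (γ t - p) (deriv γ t) =
      ‖γ v - p‖ ^ 2 - ‖γ u - p‖ ^ 2 := by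
    have h := integral_bilin_deriv_add (innerSL ℝ) hγp hγp u v
    simp only [deriv_sub_const, innerSL_apply_apply ℝ, real_inner_self_eq_norm_sq] at h
    rw [← h]
    refine intervalIntegral.integral_congr fun t _ => ?_
    simp only [real_inner_comm (γ t - p), two_mul]
  calc m * ((‖γ v - p‖ ^ 2 - ‖γ u - p‖ ^ 2) / 2)
      = action (fun z w => m * inner ℝ (z - p) w) u v γ := by
        rw [← hparts, action, intervalIntegral.integral_const_mul,
          intervalIntegral.integral_const_mul, mul_div_cancel_left₀ _ two_ne_zero]
    _ ≤ weightedLength G u v γ := by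
        refine action_mono (by fun_prop) (continuous_weightedLength_integrand hG) hγ huv
          fun t ht w => ?_
        calc m * inner ℝ (γ t - p) w ≤ m * (‖γ t - p‖ * ‖w‖) :=
              mul_le_mul_of_nonneg_left (real_inner_le_norm _ _) hm
          _ = m * ‖γ t - p‖ * ‖w‖ := (mul_assoc _ _ _).symm
          _ ≤ G (γ t) * ‖w‖ := mul_le_mul_of_nonneg_right (hlow t ht) (norm_nonneg w)

namespace LinearWells

variable {E : Type*} [NormedAddCommGroup E] [InnerProductSpace ℝ E] [FiniteDimensional ℝ E]
  {F : E → ℝ} {P : Set E} {m C s c a b M Λ : ℝ} {γ : ℝ → E} {K : NNReal}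

theorem exists_time_near_well (h : LinearWells F P m C s c) (hγ : LipschitzWith K γ)
    (hb : γ b ∈ P) (hab : a ≤ b) :
    ∃ v ∈ Icc a b, c * curveLength a v γ ≤ weightedLength F a v γ ∧
      ∃ p ∈ P, ‖γ v - p‖ ≤ s / 2 := by
  have hnear : ∀ z, Metric.infDist z P ≤ s / 2 → ∃ p ∈ P, ‖z - p‖ ≤ s / 2 := fun z hz => by
    obtain ⟨p, hp, hdist⟩ := h.isCompact.exists_infDist_eq_dist ⟨_, hb⟩ z
    exact ⟨p, hp, by rwa [← dist_eq_norm, ← hdist]⟩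
  rcases lt_or_ge (Metric.infDist (γ a) P) (s / 2) with hlt | hge
  · exact ⟨a, left_mem_Icc.2 hab, by simp [action], hnear _ hlt.le⟩
  · obtain ⟨v, hv, hdist, hfar⟩ := exists_first_time_eq
      (((Metric.continuous_infDist_pt P).comp hγ.continuous).neg) (c := -(s / 2)) hab
      (neg_le_neg hge) (by simp [Metric.infDist_zero_of_mem hb, (half_pos h.radius_pos).le])
    refine ⟨v, hv, ?_, hnear _ (neg_injective hdist).le⟩
    refine mul_curveLength_le_weightedLength h.continuous hγ hv.1 fun t ht =>
      h.away _ fun p hp => ?_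
    rw [← dist_eq_norm]
    exact (neg_le_neg_iff.1 (hfar t ht)).trans (Metric.infDist_le_dist_of_mem hp)

theorem curveLength_le_or_exists_crossing (h : LinearWells F P m C s c) (hγ : LipschitzWith K γ)
    (hb : γ b ∈ P) (hab : a ≤ b) (hM : weightedLength F a b γ ≤ M)
    (hball : ∀ p ∈ P, ∀ u v, a ≤ u → u ≤ v → v ≤ b → (∀ t ∈ Icc u v, ‖γ t - p‖ ≤ s) →
      curveLength u v γ ≤ Λ) :
    curveLength a b γ ≤ M / c + Λ ∨ ∃ v ∈ Icc a b, curveLength a v γ ≤ M / c + Λ ∧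
      3 / 8 * m * s ^ 2 ≤ weightedLength F a v γ := by
  obtain ⟨u, hu, hlen, p, hp, hup⟩ := h.exists_time_near_well hγ hb hab
  have hau : curveLength a u γ ≤ M / c := by
    rw [le_div_iff₀' h.level_pos]
    exact hlen.trans
      ((weightedLength_mono_interval h.continuous h.nonneg hγ le_rfl hu.1 hu.2).trans hM)
  have hsplit v := action_add_adjacent continuous_curveLength_integrand hγ a u v
  by_cases hstay : ∀ t ∈ Icc u b, ‖γ t - p‖ ≤ s
  · left
    rw [curveLength, ← hsplit]
    exact add_le_add hau (hball p hp u b hu.1 hu.2 le_rfl hstay)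
  · push Not at hstay
    obtain ⟨t, ht, hts⟩ := hstay
    obtain ⟨v, hv, hvs, hin⟩ := exists_first_time_eq (f := fun t => ‖γ t - p‖)
      (hγ.continuous.sub continuous_const).norm ht.1
      (hup.trans (half_le_self h.radius_pos.le)) hts.le
    have hvb := hv.2.trans ht.2
    refine Or.inr ⟨v, ⟨hu.1.trans hv.1, hvb⟩, ?_, ?_⟩
    · rw [curveLength, ← hsplit]
      exact add_le_add hau (hball p hp u v hu.1 hv.1 hvb hin)
    · calc 3 / 8 * m * s ^ 2 = m * ((s ^ 2 - (s / 2) ^ 2) / 2) := by ring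
        _ ≤ m * ((‖γ v - p‖ ^ 2 - ‖γ u - p‖ ^ 2) / 2) := by
          have := h.slope_pos.le
          rw [hvs]
          gcongr
        _ ≤ weightedLength F u v γ := mul_norm_sq_sub_le_weightedLength h.continuous hγ hv.1
          h.slope_pos.le fun t ht => h.lower p hp _ (hin t ht)
        _ ≤ weightedLength F a v γ :=
          weightedLength_mono_interval h.continuous h.nonneg hγ hu.1 hv.1 le_rfl

theorem curveLength_le_of_ball_bound (h : LinearWells F P m C s c) (hγ : LipschitzWith K γ)
    (hb : γ b ∈ P) (hab : a ≤ b) (hM : weightedLength F a b γ ≤ M) (hΛ : 0 ≤ Λ)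
    (hball : ∀ p ∈ P, ∀ u v, a ≤ u → u ≤ v → v ≤ b → (∀ t ∈ Icc u v, ‖γ t - p‖ ≤ s) →
      curveLength u v γ ≤ Λ) :
    curveLength a b γ ≤ (⌈M / (3 / 8 * m * s ^ 2)⌉₊ + 1) * (M / c + Λ) := by
  have hm := h.slope_pos
  have hs := h.radius_pos
  have hM0 : 0 ≤ M := (weightedLength_nonneg h.nonneg hab γ).trans hM
  have hcross : 0 < 3 / 8 * m * s ^ 2 := by positivity
  refine le_mul_of_descent (X := Icc a b) (ℓ := fun t => curveLength t b γ)
    (e := fun t => weightedLength F t b γ) hcross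
    (add_nonneg (div_nonneg hM0 h.level_pos.le) hΛ)
    (fun t => weightedLength_nonneg h.nonneg t.2.2 γ) (fun t => ?_) ⟨a, left_mem_Icc.2 hab⟩
    (hM.trans ((div_le_iff₀ hcross).1 (Nat.le_ceil _)))
  rcases h.curveLength_le_or_exists_crossing hγ hb t.2.2
    ((weightedLength_mono_interval h.continuous h.nonneg hγ t.2.1 t.2.2 le_rfl).trans hM)
    (fun p hp u v hu => hball p hp u v (t.2.1.trans hu)) with hle | ⟨v, hv, hlen, henergy⟩
  · exact Or.inl hle
  · refine Or.inr ⟨⟨v, t.2.1.trans hv.1, hv.2⟩, ?_, ?_⟩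
    · rw [curveLength, ← action_add_adjacent continuous_curveLength_integrand hγ t v b]
      exact add_le_add_left hlen _
    · rw [weightedLength, weightedLength, ← action_add_adjacent
        (continuous_weightedLength_integrand h.continuous) hγ t v b]
      exact add_le_add_left henergy _

variable {B : E →L[ℝ] E →L[ℝ] ℝ} {κ : ℝ} {q : E}

theorem exists_curveLength_bound (h : LinearWells F P m C s c)
    (hB : ∀ u v, |B u v - B v u| ≤ ‖u‖ * ‖v‖) (hκ : 0 ≤ κ) (hκm : κ < 2 * m) (hq : q ∈ P)
    (p : E) (A : ℝ) :
    ∃ L, ∀ η a b γ, 0 < η → η ≤ 1 → IsPenalizedMin (fun z => F z + η) B κ A p q a b γ →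
      curveLength a b γ ≤ L := by
  set M := penalized (fun z => F z + 1) B κ A 0 1 (AffineMap.lineMap p q : ℝ → E)
  refine ⟨(⌈M / (3 / 8 * m * s ^ 2)⌉₊ + 1) * (M / c +
    4 * (√(2 * ((C + 1) / (1 - κ / (2 * m))) + 1) * (1 / m + 1)) * √M),
    fun η a b γ hη hη1 hmin => ?_⟩
  obtain ⟨K, hK⟩ := hmin.curve.lipschitz
  obtain ⟨K', hK'⟩ := (lipCurve_lineMap p q).lipschitz
  have hm := h.slope_pos
  have hM : weightedLength (fun z => F z + η) a b γ ≤ M := by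
    refine (le_add_of_nonneg_right (mul_nonneg hκ (abs_nonneg _))).trans
      ((hmin.le (lipCurve_lineMap p q)).trans (add_le_add_left ?_ _))
    rw [weightedLength_add_const h.continuous hK', weightedLength_add_const h.continuous hK']
    gcongr
    exact curveLength_nonneg zero_le_one _
  have hMF : weightedLength F a b γ ≤ M := by
    rw [weightedLength_add_const h.continuous hK] at hM
    linarith [mul_nonneg hη.le (curveLength_nonneg hmin.curve.le γ)]
  refine h.curveLength_le_of_ball_bound hK (hmin.curve.right ▸ hq) hmin.curve.le hMF
    (by positivity) fun w hw u v hau huv hvb hin =>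
      (h.curveLength_le_of_isPenalizedMin hB hκ hκm hη hmin hw hau huv hvb hin).trans ?_
  gcongr

theorem exists_isPenalizedMin (h : LinearWells F P m C s c)
    (hB : ∀ u v, |B u v - B v u| ≤ ‖u‖ * ‖v‖) (hκ : 0 ≤ κ) (hκm : κ < 2 * m) (hq : q ∈ P)
    (p : E) (A : ℝ) : ∃ γ, IsPenalizedMin F B κ A p q 0 1 γ := by
  obtain ⟨L, hL⟩ := h.exists_curveLength_bound hB hκ hκm hq p A
  have hη (n : ℕ) : 0 < 1 / ((n : ℝ) + 1) := Nat.one_div_pos_of_nat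
  have hη1 (n : ℕ) : 1 / ((n : ℝ) + 1) ≤ 1 :=
    (div_le_one (by positivity)).2 (le_add_of_nonneg_left n.cast_nonneg)
  choose γs hγs using fun n : ℕ => exists_isPenalizedMin_of_forall_le (B := B) (A := A) (p := p)
    (q := q) (G := fun z => F z + 1 / ((n : ℝ) + 1)) (h.continuous.add continuous_const) (hη n)
    (fun z => le_add_of_nonneg_left (h.nonneg z)) hκ
  refine exists_isPenalizedMin_of_minimizing h.continuous h.nonneg (fun n => (hγs n).curve)
    (fun n => hL _ _ _ _ (hη n) (hη1 n) (hγs n)) fun e d δ hδ ε hε => ?_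
  have hlim : Tendsto (fun n : ℕ => 1 / ((n : ℝ) + 1) * curveLength e d δ) atTop (𝓝 0) := by
    simpa using tendsto_one_div_add_atTop_nhds_zero_nat.mul_const (curveLength e d δ)
  filter_upwards [hlim.eventually_lt_const hε] with n hn
  obtain ⟨K, hK⟩ := (hγs n).curve.lipschitz
  obtain ⟨K', hK'⟩ := hδ.lipschitz
  have hle := (hγs n).le hδ
  simp only [penalized] at hle ⊢
  rw [weightedLength_add_const h.continuous hK, weightedLength_add_const h.continuous hK'] at hle
  linarith [mul_nonneg (hη n).le (curveLength_nonneg zero_le_one (γs n))]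

end LinearWells

/-! ### Correcting the area of a planar curve -/

/-- The bilinear form `(z, v) ↦ z¹ v²` on the plane, whose `bilinArea` is the signed area. -/
def areaForm : ℂ →L[ℝ] ℂ →L[ℝ] ℝ :=
  (ContinuousLinearMap.mul ℝ ℝ).bilinearComp Complex.reCLM Complex.imCLM

theorem areaForm_apply (z v : ℂ) : areaForm z v = z.re * v.im := rfl

theorem areaForm_sub_swap (z v : ℂ) :
    areaForm z v - areaForm v z = (starRingEnd ℂ z * v).im := by
  simp only [areaForm_apply, Complex.mul_im, Complex.conj_re, Complex.conj_im]
  ring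

theorem abs_areaForm_sub_swap_le (z v : ℂ) : |areaForm z v - areaForm v z| ≤ ‖z‖ * ‖v‖ := by
  rw [areaForm_sub_swap]
  simpa using Complex.abs_im_le_norm (starRingEnd ℂ z * v)

section Rotation

variable {F : ℂ → ℝ} {p z u : ℂ} {a b k : ℝ} {γ : ℝ → ℂ}

theorem weightedLength_rotation (hab : a ≤ b) (hu : ‖u‖ = 1)
    (hF : ∀ t ∈ Icc a b, F (p + u * (γ t - p)) = F (γ t)) :
    weightedLength F a b (fun t => p + u * (γ t - p)) = weightedLength F a b γ := by
  refine intervalIntegral.integral_congr fun t ht => ?_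
  rw [uIcc_of_le hab] at ht
  simp only [hF t ht, deriv_const_add', deriv_const_mul_field, deriv_sub_const, norm_mul, hu,
    one_mul]

theorem sweptArea_rotation (hu : ‖u‖ = 1) :
    sweptArea areaForm p a b (fun t => p + u * (γ t - p)) = sweptArea areaForm p a b γ := by
  have hconj : starRingEnd ℂ u * u = 1 := by simp [Complex.conj_mul', hu]
  refine intervalIntegral.integral_congr fun t _ => ?_
  simp only [deriv_const_add', deriv_const_mul_field, deriv_sub_const, add_sub_cancel_left,
    areaForm_sub_swap, map_mul]
  rw [mul_mul_mul_comm, hconj, one_mul]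

/-- The arc of angle `k` of the circle centered at `p` that ends at `z` at time `1`. -/
def circleArc (p z : ℂ) (k t : ℝ) : ℂ := p + Complex.exp (((t - 1) * k : ℝ) * Complex.I) * (z - p)

theorem norm_circleArc_sub (t : ℝ) : ‖circleArc p z k t - p‖ = ‖z - p‖ := by
  rw [circleArc, add_sub_cancel_left, norm_mul, Complex.norm_exp_ofReal_mul_I, one_mul]

theorem hasDerivAt_circleArc (t : ℝ) :
    HasDerivAt (circleArc p z k) (k * Complex.I * (circleArc p z k t - p)) t := by
  have hangle :
      HasDerivAt (fun t : ℝ => (((t - 1) * k : ℝ) : ℂ) * Complex.I) (k * Complex.I) t := by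
    simpa using (((hasDerivAt_id t).sub_const 1).mul_const k).ofReal_comp.mul_const Complex.I
  refine ((hangle.cexp.mul_const (z - p)).const_add p).congr_deriv ?_
  rw [circleArc]
  ring

theorem norm_deriv_circleArc (t : ℝ) : ‖deriv (circleArc p z k) t‖ = |k| * ‖z - p‖ := by
  simp [(hasDerivAt_circleArc t).deriv, norm_circleArc_sub]

theorem lipCurve_circleArc :
    LipCurve 0 1 (circleArc p z k) (p + Complex.exp ((-k : ℝ) * Complex.I) * (z - p)) z := by
  refine ⟨zero_le_one, ⟨(|k| * ‖z - p‖).toNNReal, lipschitzWith_of_nnnorm_deriv_le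
    (fun t => (hasDerivAt_circleArc t).differentiableAt) fun t => ?_⟩, ?_, ?_⟩
  · rw [← NNReal.coe_le_coe, coe_nnnorm, norm_deriv_circleArc]
    exact Real.le_coe_toNNReal _
  · simp [circleArc]
  · simp [circleArc]

theorem weightedLength_circleArc {y : ℝ} (hF : ∀ w, ‖w - p‖ = ‖z - p‖ → F w = y) :
    weightedLength F 0 1 (circleArc p z k) = y * (|k| * ‖z - p‖) := by
  simp [weightedLength, action, norm_deriv_circleArc, hF _ (norm_circleArc_sub _)]

theorem sweptArea_circleArc :
    sweptArea areaForm p 0 1 (circleArc p z k) = k * ‖z - p‖ ^ 2 / 2 := by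
  have hintegrand : ∀ t, 1 / 2 * (areaForm (circleArc p z k t - p) (deriv (circleArc p z k) t) -
      areaForm (deriv (circleArc p z k) t) (circleArc p z k t - p)) = k * ‖z - p‖ ^ 2 / 2 := by
    intro t
    rw [areaForm_sub_swap, (hasDerivAt_circleArc t).deriv, mul_left_comm, Complex.conj_mul',
      norm_circleArc_sub, mul_right_comm, ← Complex.ofReal_pow, ← Complex.ofReal_mul,
      Complex.im_ofReal_mul, Complex.I_im]
    ring
  simp only [sweptArea, action, hintegrand, intervalIntegral.integral_const, sub_zero, one_smul]

end Rotation

section Correction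

variable {F : ℂ → ℝ} {p q : ℂ} {ρ κ A a b : ℝ} {γ : ℝ → ℂ}

theorem LipCurve.exists_rotate_arc (h : LipCurve a b γ p q) (hF : Continuous F)
    (hrad : ∀ z w, ‖z - p‖ ≤ ρ → ‖w - p‖ = ‖z - p‖ → F w = F z) {t : ℝ} (ht : t ∈ Icc a b)
    (htρ : ‖γ t - p‖ = ρ) (hin : ∀ s ∈ Icc a t, ‖γ s - p‖ ≤ ρ) (k : ℝ) :
    ∃ d δ, LipCurve a d δ p q ∧
      weightedLength F a d δ = weightedLength F a b γ + F (γ t) * (|k| * ρ) ∧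
      bilinArea areaForm a d δ = bilinArea areaForm a b γ + k * ρ ^ 2 / 2 := by
  obtain ⟨K, hK⟩ := h.lipschitz
  set u := Complex.exp ((-k : ℝ) * Complex.I)
  have hu : ‖u‖ = 1 := Complex.norm_exp_ofReal_mul_I _
  let σ : ℝ → ℂ := fun s => p + u * (γ s - p)
  have hσK : LipschitzWith (0 + ‖u‖₊ * (K + 0)) σ := (LipschitzWith.const p).add
    ((lipschitzWith_smul u).comp (hK.sub (LipschitzWith.const p)))
  have hσ : LipCurve a t σ p (σ t) := ⟨ht.1, ⟨_, hσK⟩, by simp [σ, h.left], rfl⟩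
  have hE := continuous_weightedLength_integrand hF
  have hA := continuous_bilinArea_integrand areaForm
  obtain ⟨d₁, δ₁, hδ₁, hadd₁⟩ := hσ.exists_concat (lipCurve_circleArc (p := p) (z := γ t) (k := k))
  obtain ⟨d, δ, hδ, hadd⟩ := hδ₁.exists_concat (h.restrict ht.2)
  refine ⟨d, δ, h.right ▸ hδ, ?_, ?_⟩
  · have hrot : weightedLength F a t σ = weightedLength F a t γ :=
      weightedLength_rotation ht.1 hu fun s hs => hrad _ _ (hin s hs) (by simp [hu])
    have harc : weightedLength F 0 1 (circleArc p (γ t) k) = F (γ t) * (|k| * ρ) := by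
      rw [weightedLength_circleArc fun w hw => hrad _ w htρ.le hw, htρ]
    simp only [weightedLength] at hrot harc ⊢
    rw [hadd _ hE, hadd₁ _ hE, hrot, harc, ← action_add_adjacent hE hK a t b]
    ring
  · obtain ⟨_, hcK⟩ := (lipCurve_circleArc (p := p) (z := γ t) (k := k)).lipschitz
    have hrot := bilinArea_eq_sweptArea_add areaForm p hσK a t
    have harc := bilinArea_eq_sweptArea_add areaForm p hcK 0 1
    have hγt := bilinArea_eq_sweptArea_add areaForm p hK a t
    rw [sweptArea_rotation hu] at hrot
    rw [sweptArea_circleArc, htρ] at harc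
    simp only [bilinArea] at hrot harc hγt ⊢
    rw [hadd _ hA, hadd₁ _ hA, ← action_add_adjacent hA hK a t b, hrot, harc, hγt,
      lipCurve_circleArc.left, lipCurve_circleArc.right, hσ.left, h.left]
    ring

theorem LipCurve.exists_bilinArea_eq (h : LipCurve a b γ p q) (hF : Continuous F) (hρ : 0 < ρ)
    (hq : ρ ≤ ‖q - p‖) (hrad : ∀ z w, ‖z - p‖ ≤ ρ → ‖w - p‖ = ‖z - p‖ → F w = F z)
    (hκ : ∀ z, ‖z - p‖ = ρ → 2 * F z ≤ κ * ρ) (A : ℝ) :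
    ∃ d δ, LipCurve a d δ p q ∧ bilinArea areaForm a d δ = A ∧
      weightedLength F a d δ ≤ penalized F areaForm κ A a b γ := by
  obtain ⟨K, hK⟩ := h.lipschitz
  obtain ⟨t, ht, htρ, hin⟩ := exists_first_time_eq (f := fun t => ‖γ t - p‖) (c := ρ)
    (hK.continuous.sub continuous_const).norm h.le (by simp [h.left, hρ.le]) (by rwa [h.right])
  obtain ⟨k, hkρ⟩ : ∃ k, k * ρ ^ 2 / 2 = A - bilinArea areaForm a b γ :=
    ⟨2 * (A - bilinArea areaForm a b γ) / ρ ^ 2, by field_simp⟩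
  obtain ⟨d, δ, hδ, hlen, harea⟩ := h.exists_rotate_arc hF hrad ht htρ hin k
  refine ⟨d, δ, hδ, by rw [harea, hkρ, add_sub_cancel], ?_⟩
  rw [hlen, penalized, abs_sub_comm, ← hkρ, abs_div, abs_mul, abs_of_pos (pow_pos hρ 2), abs_two]
  nlinarith [mul_le_mul_of_nonneg_right (hκ _ htρ) (mul_nonneg (abs_nonneg k) hρ.le)]

theorem IsPenalizedMin.exists_constrained_min (h : IsPenalizedMin F areaForm κ A p q a b γ)
    (hF : Continuous F) (hρ : 0 < ρ) (hq : ρ ≤ ‖q - p‖)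
    (hrad : ∀ z w, ‖z - p‖ ≤ ρ → ‖w - p‖ = ‖z - p‖ → F w = F z)
    (hκ : ∀ z, ‖z - p‖ = ρ → 2 * F z ≤ κ * ρ) :
    ∃ d δ, LipCurve a d δ p q ∧ bilinArea areaForm a d δ = A ∧
      ∀ e f ε, LipCurve e f ε p q → bilinArea areaForm e f ε = A →
        weightedLength F a d δ ≤ weightedLength F e f ε := by
  obtain ⟨d, δ, hδ, harea, hlen⟩ := h.curve.exists_bilinArea_eq hF hρ hq hrad hκ A
  refine ⟨d, δ, hδ, harea, fun e f ε hε hεA => hlen.trans ((h.le hε).trans_eq ?_)⟩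
  rw [penalized, hεA, sub_self, abs_zero, mul_zero, add_zero]

end Correction

/-! ### Curves in `ℝ × ℝ` and in `ℂ` -/

section Plane

open Complex (equivRealProdCLM)

theorem enorm2_equivRealProdCLM (z : ℂ) : enorm2 (equivRealProdCLM z) = ‖z‖ := by
  rw [enorm2, Complex.norm_eq_sqrt_sq_add_sq]
  rfl

theorem enorm2_equivRealProdCLM_sub (z : ℂ) (p : ℝ × ℝ) :
    enorm2 (equivRealProdCLM z - p) = ‖z - equivRealProdCLM.symm p‖ := by
  rw [← enorm2_equivRealProdCLM, map_sub, ContinuousLinearEquiv.apply_symm_apply]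

theorem enorm2_zero : enorm2 0 = 0 := by simp [enorm2]

theorem enorm2_neg (v : ℝ × ℝ) : enorm2 (-v) = enorm2 v := by simp [enorm2]

theorem enorm2_nonneg (v : ℝ × ℝ) : 0 ≤ enorm2 v := Real.sqrt_nonneg _

theorem continuous_enorm2 : Continuous enorm2 := by
  unfold enorm2
  fun_prop

theorem deriv_continuousLinearEquiv_comp {E E' : Type*} [NormedAddCommGroup E] [NormedSpace ℝ E]
    [NormedAddCommGroup E'] [NormedSpace ℝ E'] (e : E ≃L[ℝ] E') (γ : ℝ → E) (t : ℝ) :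
    deriv (fun s => e (γ s)) t = e (deriv γ t) := by
  rw [← fderiv_apply_one_eq_deriv, ← fderiv_apply_one_eq_deriv]
  exact DFunLike.congr_fun (e.comp_fderiv (f := γ) (x := t)) 1

theorem degLen_equivRealProdCLM_comp (F : ℝ × ℝ → ℝ) (a b : ℝ) (γ : ℝ → ℂ) :
    degLen F a b (fun t => equivRealProdCLM (γ t)) =
      weightedLength (fun z => F (equivRealProdCLM z)) a b γ := by
  simp only [degLen, weightedLength, action, deriv_continuousLinearEquiv_comp,
    enorm2_equivRealProdCLM]

theorem sArea_equivRealProdCLM_comp {K : NNReal} {γ : ℝ → ℂ} (hγ : LipschitzWith K γ)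
    (a b : ℝ) : sArea a b (fun t => equivRealProdCLM (γ t)) = bilinArea areaForm a b γ := by
  refine intervalIntegral.integral_congr_ae (hγ.ae_differentiableAt_real.mono fun t ht _ => ?_)
  exact congrArg ((γ t).re * ·) (Complex.imCLM.hasFDerivAt.comp_hasDerivAt t ht.hasDerivAt).deriv

theorem degLen_congr_Ioo (F : ℝ × ℝ → ℝ) {a b : ℝ} {γ δ : ℝ → ℝ × ℝ} (hab : a ≤ b)
    (h : EqOn γ δ (Ioo a b)) : degLen F a b γ = degLen F a b δ :=
  action_congr_Ioo (L := fun z v => F z * enorm2 v) hab h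

theorem sArea_congr_Ioo {a b : ℝ} {γ δ : ℝ → ℝ × ℝ} (hab : a ≤ b) (h : EqOn γ δ (Ioo a b)) :
    sArea a b γ = sArea a b δ := by
  refine intervalIntegral.integral_congr_Ioo_of_le hab fun t ht => ?_
  have hsnd : (fun s => (γ s).2) =ᶠ[𝓝 t] fun s => (δ s).2 := by
    filter_upwards [isOpen_Ioo.mem_nhds ht] with s hs using congrArg Prod.snd (h hs)
  simp only [h ht, hsnd.deriv_eq]

theorem LipCurve.isCurve {a b : ℝ} {γ : ℝ → ℂ} {p q : ℝ × ℝ}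
    (h : LipCurve a b γ (equivRealProdCLM.symm p) (equivRealProdCLM.symm q)) :
    IsCurve a b (fun t => equivRealProdCLM (γ t)) p q := by
  obtain ⟨K, hK⟩ := h.lipschitz
  exact ⟨h.le, (equivRealProdCLM.lipschitz.comp hK).locallyLipschitz,
    by simp [h.left], by simp [h.right]⟩

theorem exists_lipCurve_of_isCurve {a b : ℝ} {γ : ℝ → ℝ × ℝ} {p q : ℝ × ℝ}
    (h : IsCurve a b γ p q) :
    ∃ δ, LipCurve a b δ (equivRealProdCLM.symm p) (equivRealProdCLM.symm q) ∧
      sArea a b γ = bilinArea areaForm a b δ ∧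
      ∀ F, degLen F a b γ = weightedLength (fun z => F (equivRealProdCLM z)) a b δ := by
  obtain ⟨hab, hlip, hleft, hright⟩ := h
  obtain ⟨K, hK⟩ := (hlip.locallyLipschitzOn (s := Icc a b)).exists_lipschitzOnWith_of_compact
    isCompact_Icc
  let δ : ℝ → ℂ := fun t => equivRealProdCLM.symm (γ (projIcc a b hab t))
  have hδ : LipschitzWith _ δ := equivRealProdCLM.symm.lipschitz.comp
    (hK.to_restrict.comp (LipschitzWith.projIcc hab))
  have heq : EqOn γ (fun t => equivRealProdCLM (δ t)) (Ioo a b) := fun t ht => by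
    simp [δ, projIcc_of_mem hab (Ioo_subset_Icc_self ht)]
  refine ⟨δ, ⟨hab, ⟨_, hδ⟩, by simp [δ, hleft], by simp [δ, hright]⟩, ?_, fun F => ?_⟩
  · rw [sArea_congr_Ioo hab heq, sArea_equivRealProdCLM_comp hδ]
  · rw [degLen_congr_Ioo F hab heq, degLen_equivRealProdCLM_comp]

theorem isoSol_of_lipCurve {F : ℝ × ℝ → ℝ} {pm pp : ℝ × ℝ} {A a b : ℝ} {γ : ℝ → ℂ}
    (hγ : LipCurve a b γ (equivRealProdCLM.symm pm) (equivRealProdCLM.symm pp))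
    (harea : bilinArea areaForm a b γ = A)
    (hmin : ∀ c d δ, LipCurve c d δ (equivRealProdCLM.symm pm) (equivRealProdCLM.symm pp) →
      bilinArea areaForm c d δ = A → weightedLength (fun z => F (equivRealProdCLM z)) a b γ ≤
        weightedLength (fun z => F (equivRealProdCLM z)) c d δ) :
    IsoSol F pm pp A a b fun t => equivRealProdCLM (γ t) := by
  obtain ⟨K, hK⟩ := hγ.lipschitz
  refine ⟨hγ.isCurve, (sArea_equivRealProdCLM_comp hK a b).trans harea, fun c d δ hδ hδA => ?_⟩
  obtain ⟨ε, hε, hεarea, hεlen⟩ := exists_lipCurve_of_isCurve hδ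
  rw [degLen_equivRealProdCLM_comp, hεlen]
  exact hmin c d ε hε (hεarea.symm.trans hδA)

end Plane

/-! ### Existence -/

theorem exists_pos_forall_le_of_isClosed {E : Type*} [SeminormedAddCommGroup E] [ProperSpace E]
    {F : E → ℝ} (hF : Continuous F) {S : Set E} (hS : IsClosed S) (hpos : ∀ z ∈ S, 0 < F z)
    (hinf : ∃ c > 0, ∃ R : ℝ, ∀ z, R ≤ ‖z‖ → c ≤ F z) : ∃ c > 0, ∀ z ∈ S, c ≤ F z := by
  obtain ⟨c, hc, R, hR⟩ := hinf
  obtain ⟨d, hd, hdS⟩ := ((isCompact_closedBall 0 R).inter_right hS).exists_forall_le'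
    hF.continuousOn fun z hz => hpos z hz.2
  refine ⟨min c d, lt_min hc hd, fun z hz => ?_⟩
  rcases le_total R ‖z‖ with hfar | hnear
  · exact (min_le_left _ _).trans (hR z hfar)
  · exact (min_le_right _ _).trans (hdS z ⟨by simpa using hnear, hz⟩)

/-- Weights on the plane that vanish linearly, with slope at least `m`, at the two points `pm` and
`pp`, are positive elsewhere and near infinity, and are radial about `pm` up to the radius `ρ`,
where the mean slope has dropped to `μ < m`. The asymmetry between the wells comes from the area of
a curve being corrected near its starting point `pm`. -/
structure SubcriticalWells (F : ℝ × ℝ → ℝ) (pm pp : ℝ × ℝ) (m μ ρ : ℝ) : Prop where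
  continuous : Continuous F
  wells_ne : pm ≠ pp
  pos : ∀ p, p ≠ pm → p ≠ pp → 0 < F p
  coercive : ∃ c > 0, ∃ R : ℝ, ∀ p : ℝ × ℝ, R ≤ ‖p‖ → c ≤ F p
  slope_pos : 0 < m
  linear : ∃ C, ∃ s > 0, ∀ p ∈ ({pm, pp} : Set (ℝ × ℝ)), ∀ z, enorm2 (z - p) ≤ s →
    m * enorm2 (z - p) ≤ F z ∧ F z ≤ C * enorm2 (z - p)
  radius_pos : 0 < ρ
  radial : ∀ z w, enorm2 (z - pm) ≤ ρ → enorm2 (w - pm) = enorm2 (z - pm) → F w = F z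
  le_on_sphere : ∀ z, enorm2 (z - pm) = ρ → F z ≤ μ * ρ
  mean_slope_lt : μ < m

namespace SubcriticalWells

open Complex (equivRealProdCLM)

variable {F : ℝ × ℝ → ℝ} {pm pp : ℝ × ℝ} {m μ ρ : ℝ}

theorem radius_le (h : SubcriticalWells F pm pp m μ ρ) : ρ ≤ enorm2 (pp - pm) := by
  -- Otherwise the reflection of `pp` in `pm` would be a third zero.
  by_contra! hlt
  obtain ⟨C, s, hs, hlin⟩ := h.linear
  have hpp : F pp ≤ 0 := by
    simpa [enorm2_zero, hs.le] using (hlin pp (by simp) pp (by simp [enorm2_zero, hs.le])).2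
  have hne : pp - pm ≠ 0 := sub_ne_zero.2 h.wells_ne.symm
  have hreflect : F (pm - (pp - pm)) = F pp := h.radial _ _ hlt.le (by
    rw [sub_sub_cancel_left, enorm2_neg])
  refine (h.pos (pm - (pp - pm)) ?_ ?_).not_ge (hreflect.trans_le hpp)
  · simpa [sub_eq_self] using hne
  · intro heq
    refine hne (self_eq_neg.1 ?_)
    rw [← sub_sub_cancel_left pm, heq]

theorem exists_level (h : SubcriticalWells F pm pp m μ ρ) {s : ℝ} (hs : 0 < s) :
    ∃ c > 0, ∀ z, (∀ p ∈ ({pm, pp} : Set (ℝ × ℝ)), s / 2 ≤ enorm2 (z - p)) → c ≤ F z := by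
  refine exists_pos_forall_le_of_isClosed (S := {z | _}) h.continuous ?_ (fun z hz => ?_) h.coercive
  · simp only [ofPred_forall]
    exact isClosed_biInter fun p _ => isClosed_le continuous_const
      (continuous_enorm2.comp (continuous_id.sub continuous_const))
  · have hne : ∀ p ∈ ({pm, pp} : Set (ℝ × ℝ)), z ≠ p := by
      rintro p hp rfl
      have := hz z hp
      rw [sub_self, enorm2_zero] at this
      exact this.not_gt (half_pos hs)
    exact h.pos z (hne pm (by simp)) (hne pp (by simp))

theorem exists_linearWells (h : SubcriticalWells F pm pp m μ ρ) :
    ∃ C s c, LinearWells (fun z => F (equivRealProdCLM z))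
      {equivRealProdCLM.symm pm, equivRealProdCLM.symm pp} m C s c := by
  obtain ⟨C, s, hs, hlin⟩ := h.linear
  obtain ⟨c, hc, haway⟩ := h.exists_level hs
  have hwell : ∀ w ∈ ({equivRealProdCLM.symm pm, equivRealProdCLM.symm pp} : Set ℂ),
      ∀ z, ‖z - w‖ ≤ s → m * ‖z - w‖ ≤ F (equivRealProdCLM z) ∧
        F (equivRealProdCLM z) ≤ C * ‖z - w‖ := by
    rintro w (rfl | rfl) z hz <;> rw [← enorm2_equivRealProdCLM_sub] at hz ⊢
    · exact hlin pm (by simp) _ hz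
    · exact hlin pp (by simp) _ hz
  refine ⟨|C|, s, c, h.continuous.comp equivRealProdCLM.continuous, (toFinite _).isCompact,
    h.slope_pos, abs_nonneg C, hs, hc, fun w hw z hz => (hwell w hw z hz).1,
    fun w hw z hz => (hwell w hw z hz).2.trans
      (mul_le_mul_of_nonneg_right (le_abs_self C) (norm_nonneg _)), fun z hz => ?_⟩
  refine haway _ ?_
  simp only [mem_insert_iff, mem_singleton_iff, forall_eq_or_imp, forall_eq,
    enorm2_equivRealProdCLM_sub] at hz ⊢
  exact hz

theorem mean_slope_nonneg (h : SubcriticalWells F pm pp m μ ρ) : 0 ≤ μ := by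
  obtain ⟨C, s, c, hwells⟩ := h.exists_linearWells
  have hle := (hwells.nonneg (equivRealProdCLM.symm pm + ρ)).trans (h.le_on_sphere _ (by
    rw [enorm2_equivRealProdCLM_sub, add_sub_cancel_left, Complex.norm_real, Real.norm_eq_abs,
      abs_of_pos h.radius_pos]))
  exact nonneg_of_mul_nonneg_left hle h.radius_pos

end SubcriticalWells

theorem existence_negative_quartic_general {F : ℝ × ℝ → ℝ} {pm pp : ℝ × ℝ} {m μ ρ : ℝ}
    (h : SubcriticalWells F pm pp m μ ρ) (A : ℝ) : ∃ a c γ, IsoSol F pm pp A a c γ := by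
  obtain ⟨C, s, c, hwells⟩ := h.exists_linearWells
  obtain ⟨γ, hγ⟩ := hwells.exists_isPenalizedMin abs_areaForm_sub_swap_le
    (mul_nonneg zero_le_two h.mean_slope_nonneg) (mul_lt_mul_of_pos_left h.mean_slope_lt two_pos)
    (mem_insert_of_mem _ rfl) (Complex.equivRealProdCLM.symm pm) A
  obtain ⟨d, δ, hδ, harea, hmin⟩ := hγ.exists_constrained_min hwells.continuous h.radius_pos
    (by
      rw [← enorm2_equivRealProdCLM_sub, ContinuousLinearEquiv.apply_symm_apply]
      exact h.radius_le)
    (fun z w hz hw => by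
      rw [← enorm2_equivRealProdCLM_sub] at hz
      rw [← enorm2_equivRealProdCLM_sub, ← enorm2_equivRealProdCLM_sub] at hw
      exact h.radial _ _ hz hw)
    (fun z hz => by
      rw [← enorm2_equivRealProdCLM_sub] at hz
      linarith [h.le_on_sphere _ hz])
  exact ⟨0, d, _, isoSol_of_lipCurve hδ harea hmin⟩

theorem sqrt_quartic (b : ℝ) {r : ℝ} (hr : 0 ≤ r) :
    √(r ^ 2 + b * r ^ 4) = √(1 + b * r ^ 2) * r := by
  rw [show r ^ 2 + b * r ^ 4 = (1 + b * r ^ 2) * r ^ 2 by ring, Real.sqrt_mul' _ (sq_nonneg r),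
    Real.sqrt_sq hr]

theorem sqrt_quartic_linear_bounds {W : ℝ × ℝ → ℝ} {p z : ℝ × ℝ} {ρ s b : ℝ} (hb : b ≤ 0)
    (hW : ∀ z, enorm2 (z - p) ≤ ρ → W z = enorm2 (z - p) ^ 2 + b * enorm2 (z - p) ^ 4)
    (hsρ : s ≤ ρ) (hz : enorm2 (z - p) ≤ s) :
    √(1 + b * s ^ 2) * enorm2 (z - p) ≤ √(W z) ∧ √(W z) ≤ 1 * enorm2 (z - p) := by
  have hr := enorm2_nonneg (z - p)
  have hsq : enorm2 (z - p) ^ 2 ≤ s ^ 2 := pow_le_pow_left₀ hr hz 2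
  rw [hW z (hz.trans hsρ), sqrt_quartic b hr]
  refine ⟨mul_le_mul_of_nonneg_right (Real.sqrt_le_sqrt ?_) hr,
    mul_le_mul_of_nonneg_right (Real.sqrt_le_one.2 ?_) hr⟩
  · linarith [mul_le_mul_of_nonpos_left hsq hb]
  · linarith [mul_nonpos_of_nonpos_of_nonneg hb (sq_nonneg (enorm2 (z - p)))]

theorem TwoWell.exists_pos_le_sqrt {W : ℝ × ℝ → ℝ} {pm pp : ℝ × ℝ} (h : TwoWell W pm pp) :
    ∃ c > 0, ∃ R : ℝ, ∀ p : ℝ × ℝ, R ≤ ‖p‖ → c ≤ √(W p) := by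
  obtain ⟨c, hc, R, hR⟩ := h.coercive
  exact ⟨√c, Real.sqrt_pos.2 hc, R, fun p hp => Real.sqrt_le_sqrt (hR p hp)⟩

theorem TwoWell.sqrt_pos {W : ℝ × ℝ → ℝ} {pm pp : ℝ × ℝ} (h : TwoWell W pm pp) {p : ℝ × ℝ}
    (hm : p ≠ pm) (hp : p ≠ pp) : 0 < √(W p) :=
  Real.sqrt_pos.2 ((h.nonneg p).lt_of_ne' fun h0 => ((h.zeroSet p).1 h0).elim hm hp)

theorem TwoWell.subcriticalWells_sqrt {W : ℝ × ℝ → ℝ} {pm pp : ℝ × ℝ} (h : TwoWell W pm pp)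
    {ρ b : ℝ} (hρ : 0 < ρ) (hb : b < 0) (hbρ : |b| * ρ ^ 2 < 1)
    (hWm : ∀ p : ℝ × ℝ, enorm2 (p - pm) ≤ ρ →
      W p = enorm2 (p - pm) ^ 2 + b * enorm2 (p - pm) ^ 4)
    (hWp : ∀ p : ℝ × ℝ, enorm2 (p - pp) ≤ ρ →
      W p = enorm2 (p - pp) ^ 2 + b * enorm2 (p - pp) ^ 4) :
    SubcriticalWells (fun p => √(W p)) pm pp √(1 + b * (ρ / 2) ^ 2) √(1 + b * ρ ^ 2) ρ := by
  have hpos : 0 < 1 + b * ρ ^ 2 := by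
    rw [abs_of_neg hb] at hbρ
    linarith
  have hlt : 1 + b * ρ ^ 2 < 1 + b * (ρ / 2) ^ 2 := by
    linarith [mul_neg_of_neg_of_pos hb (pow_pos hρ 2)]
  refine
    { continuous := h.smooth.continuous.sqrt
      wells_ne := h.wells_ne
      pos := fun p => h.sqrt_pos
      coercive := h.exists_pos_le_sqrt
      slope_pos := Real.sqrt_pos.2 (hpos.trans hlt)
      linear := ⟨1, ρ / 2, half_pos hρ, ?_⟩
      radius_pos := hρ
      radial := fun z w hz hw => by rw [hWm z hz, hWm w (hw.trans_le hz), hw]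
      le_on_sphere := fun z hz => by rw [hWm z hz.le, hz, sqrt_quartic b hρ.le]
      mean_slope_lt := Real.sqrt_lt_sqrt hpos.le hlt }
  rintro p (rfl | rfl) z hz
  · exact sqrt_quartic_linear_bounds hb.le hWm (half_le_self hρ.le) hz
  · exact sqrt_quartic_linear_bounds hb.le hWp (half_le_self hρ.le) hz

/-- if near each well `W` equals `|p − well|² + b|p − well|⁴` with `b < 0`
(and `|b|ρ² < 1` on the radius-`ρ` neighborhoods), then the isoperimetric problem has a
solution for every constraint value `A`. -/
theorem existence_negative_quartic
    (W : ℝ × ℝ → ℝ) (pm pp : ℝ × ℝ) (hW : TwoWell W pm pp)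
    (F : ℝ × ℝ → ℝ) (hF : F = fun p => Real.sqrt (W p))
    (ρ b : ℝ) (hρ : 0 < ρ) (hb : b < 0) (hbρ : |b| * ρ ^ 2 < 1)
    (hWm : ∀ p : ℝ × ℝ, enorm2 (p - pm) ≤ ρ →
      W p = enorm2 (p - pm) ^ 2 + b * enorm2 (p - pm) ^ 4)
    (hWp : ∀ p : ℝ × ℝ, enorm2 (p - pp) ≤ ρ →
      W p = enorm2 (p - pp) ^ 2 + b * enorm2 (p - pp) ^ 4) :
    ∀ A : ℝ, ∃ a c γ, IsoSol F pm pp A a c γ := by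
  subst hF
  exact existence_negative_quartic_general (hW.subcriticalWells_sqrt hρ hb hbρ hWm hWp)
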